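/- arXiv:2010.00429 — 3 statements merged into one kernel-verified Lean document; each statement's English description precedes it below -/
import Mathlib

section
/- For every integer Δ ≥ 3 and every integer g ≥ 3, there exists a finite simple graph G with maximum degree at most Δ and girth at least g such that the injective chromatic index of G satisfies χ'_inj(G) ≥ Δ(Δ − 1)/(4 ln Δ). -/
open SimpleGraph

/-- Two distinct edges of `G` *conflict* if they are at distance exactly 1 in `G`
(they share no endpoint but some endpoint of one is adjacent to some endpoint of the
other), or they lie in a common triangle of `G`. -/
def EdgeConflict {V : Type*} (G : SimpleGraph V) (e₁ e₂ : Sym2 V) : Prop :=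
  e₁ ≠ e₂ ∧
    (((∀ u ∈ e₁, u ∉ e₂) ∧ ∃ u ∈ e₁, ∃ v ∈ e₂, G.Adj u v) ∨
      (∃ a b c : V, G.Adj a b ∧ G.Adj b c ∧ G.Adj a c ∧
        e₁ ∈ ({s(a, b), s(b, c), s(a, c)} : Set (Sym2 V)) ∧
        e₂ ∈ ({s(a, b), s(b, c), s(a, c)} : Set (Sym2 V))))

/-- An injective edge-coloring of `G` with `k` colors. -/
def IsInjEdgeColoring {V : Type*} (G : SimpleGraph V) {k : ℕ} (f : Sym2 V → Fin k) : Prop :=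
  ∀ e₁ ∈ G.edgeSet, ∀ e₂ ∈ G.edgeSet, EdgeConflict G e₁ e₂ → f e₁ ≠ f e₂

/-- The injective chromatic index of `G`. -/
noncomputable def injChromIndex {V : Type*} (G : SimpleGraph V) : ℕ :=
  sInf {k : ℕ | ∃ f : Sym2 V → Fin k, IsInjEdgeColoring G f}



section InjHelpers
open Finset

/-- The number of edges is at most the number of colors times the independence number. -/
theorem inj_edges_le {V : Type*} [Fintype V] (G : SimpleGraph V) {k : ℕ}
    (f : Sym2 V → Fin k) (hf : IsInjEdgeColoring G f) (a : ℕ)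
    (ha : ∀ S : Finset V, (∀ x ∈ S, ∀ y ∈ S, ¬ G.Adj x y) → S.card ≤ a) :
    G.edgeSet.ncard ≤ k * a := by
  classical
  have hcard : ∀ c : Fin k, (G.edgeFinset.filter (fun e => f e = c)).card ≤ a := by
    intro c
    set C := G.edgeFinset.filter (fun e => f e = c) with hC
    have hmem : ∀ e, e ∈ C ↔ e ∈ G.edgeSet ∧ f e = c := by
      intro e; simp [hC]
    have hnc : ∀ e ∈ C, ∀ e' ∈ C, ¬ EdgeConflict G e e' := by
      intro e he e' he' h
      rw [hmem] at he he'
      exact hf e he.1 e' he'.1 h (he.2.trans he'.2.symm)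
    -- each edge has a leaf
    have hleaf : ∀ e : C, ∃ x : V, x ∈ e.1 ∧ ∀ e' ∈ C, x ∈ e' → e' = e.1 := by
      rintro ⟨e, he⟩
      induction e using Sym2.ind with
      | _ u v =>
      by_contra hcon
      push Not at hcon
      obtain ⟨e1, he1, hu1, hne1⟩ := hcon u (by simp)
      obtain ⟨e2, he2, hv2, hne2⟩ := hcon v (by simp)
      obtain ⟨p, rfl⟩ := Sym2.mem_iff_exists.1 hu1
      obtain ⟨q, rfl⟩ := Sym2.mem_iff_exists.1 hv2
      have auv : G.Adj u v := ((hmem _).1 he).1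
      have aup : G.Adj u p := ((hmem _).1 he1).1
      have avq : G.Adj v q := ((hmem _).1 he2).1
      have hpv : p ≠ v := by rintro rfl; exact hne1 rfl
      have hqu : q ≠ u := by rintro rfl; exact hne2 Sym2.eq_swap
      by_cases hpq : p = q
      · subst hpq
        refine hnc _ he _ he1 ⟨fun h => hne1 h.symm, Or.inr ⟨u, v, p, auv, avq, aup, ?_, ?_⟩⟩
        · simp
        · simp
      · refine hnc _ he1 _ he2 ⟨?_, Or.inl ⟨?_, u, by simp, v, by simp, auv⟩⟩
        · intro h
          have : u ∈ s(v, q) := h ▸ (by simp)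
          rw [Sym2.mem_iff] at this
          rcases this with h | h
          · exact auv.ne h
          · exact hqu h.symm
        · intro w hw hw'
          rw [Sym2.mem_iff] at hw hw'
          rcases hw with rfl | rfl <;> rcases hw' with h | h
          · exact auv.ne h
          · exact hqu h.symm
          · exact hpv h
          · exact hpq h
    choose L hL1 hL2 using hleaf
    have hinj : Function.Injective L := by
      intro e e' h
      have := hL2 e e'.1 e'.2 (h ▸ hL1 e')
      exact (Subtype.ext this).symm
    have hS : (Finset.univ.image L).card = C.card := by
      rw [Finset.card_image_of_injective _ hinj]; simp
    rw [← hS]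
    apply ha
    intro x hx y hy hadj
    simp only [Finset.mem_image, Finset.mem_univ, true_and] at hx hy
    obtain ⟨e, rfl⟩ := hx
    obtain ⟨e', rfl⟩ := hy
    have hee : e ≠ e' := by rintro rfl; exact hadj.ne rfl
    have hee' : e.1 ≠ e'.1 := fun h => hee (Subtype.ext h)
    apply hnc _ e.2 _ e'.2
    refine ⟨hee', ?_⟩
    by_cases hd : ∀ u ∈ e.1, u ∉ e'.1
    · exact Or.inl ⟨hd, _, hL1 e, _, hL1 e', hadj⟩
    · right
      push Not at hd
      obtain ⟨u, hu, hu'⟩ := hd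
      have h1 : u ≠ L e := by
        rintro rfl; exact hee' (hL2 e _ e'.2 hu').symm
      have h2 : u ≠ L e' := by
        rintro rfl; exact hee' (hL2 e' _ e.2 hu)
      have E1 : e.1 = s(L e, u) := (Sym2.mem_and_mem_iff h1.symm).1 ⟨hL1 e, hu⟩
      have E2 : e'.1 = s(L e', u) := (Sym2.mem_and_mem_iff h2.symm).1 ⟨hL1 e', hu'⟩
      have A1 : G.Adj (L e) u := by
        have := ((hmem _).1 e.2).1
        rw [E1] at this; exact this
      have A2 : G.Adj (L e') u := by
        have := ((hmem _).1 e'.2).1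
        rw [E2] at this; exact this
      refine ⟨L e, L e', u, hadj, A2, A1, ?_, ?_⟩
      · rw [E1]; simp
      · rw [E2]; simp
  have h1 : G.edgeSet.ncard = G.edgeFinset.card := by
    rw [← SimpleGraph.coe_edgeFinset, Set.ncard_coe_finset]
  rw [h1, Finset.card_eq_sum_card_fiberwise (f := f) (t := Finset.univ) (by simp)]
  calc _ ≤ ∑ c : Fin k, a := Finset.sum_le_sum (fun c _ => hcard c)
    _ = k * a := by simp

theorem injChromIndex_spec {V : Type*} [Fintype V] (G : SimpleGraph V) :
    ∃ f : Sym2 V → Fin (injChromIndex G), IsInjEdgeColoring G f := by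
  classical
  have : injChromIndex G ∈ {k : ℕ | ∃ f : Sym2 V → Fin k, IsInjEdgeColoring G f} := by
    apply Nat.sInf_mem
    refine ⟨Fintype.card (Sym2 V), Fintype.equivFin _, ?_⟩
    intro e1 _ e2 _ h hh
    exact h.1 ((Fintype.equivFin _).injective hh)
  exact this

/-- Number of permutations with prescribed values on an injective family of points. -/
theorem card_perm_prescribed {P ι : Type*} [Fintype P] [DecidableEq P] [Fintype ι]
    (z w : ι → P) (hz : Function.Injective z) :
    ((Finset.univ : Finset (Equiv.Perm P)).filter (fun r => ∀ i, r (z i) = w i)).card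
      ≤ (Fintype.card P - Fintype.card ι).factorial := by
  classical
  by_cases hne : ∃ r0 : Equiv.Perm P, ∀ i, r0 (z i) = w i
  · obtain ⟨r0, hr0⟩ := hne
    have hc : Fintype.card {a : P // a ∉ Set.range z} = Fintype.card P - Fintype.card ι := by
      rw [Fintype.card_subtype_compl]
      congr 1
      exact Fintype.card_congr (Equiv.ofInjective z hz).symm
    rw [← hc, ← Fintype.card_perm,
      Fintype.card_congr (Equiv.Perm.subtypeEquivSubtypePerm (fun a => a ∉ Set.range z)),
      Fintype.card_subtype]
    apply Finset.card_le_card_of_injOn (fun r => r0⁻¹ * r)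
    · intro r hr
      simp only [Finset.coe_filter, Finset.mem_univ, true_and, Set.mem_ofPred_eq] at hr ⊢
      intro a ha
      rw [not_not] at ha
      obtain ⟨i, rfl⟩ := ha
      simp [hr i, ← hr0 i]
    · intro a _ b _ h
      simpa using h
  · have : ((Finset.univ : Finset (Equiv.Perm P)).filter (fun r => ∀ i, r (z i) = w i)) = ∅ := by
      apply Finset.filter_false_of_mem
      intro r _ h
      exact hne ⟨r, h⟩
    rw [this]; simp

theorem card_perm_cycle {P : Type*} [Fintype P] [DecidableEq P] (t : P → P) (l : ℕ)
    (x y : Fin (l + 1) → P) (hxy : Function.Injective (Sum.elim x y)) :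
    ((Finset.univ : Finset (Equiv.Perm P)).filter (fun r => ∀ i, r (y (i + 1)) = t (r (x i)))).card
      ≤ Fintype.card P ^ (l + 1) * (Fintype.card P - 2 * (l + 1)).factorial := by
  classical
  have hsub : ((Finset.univ : Finset (Equiv.Perm P)).filter
      (fun r => ∀ i, r (y (i + 1)) = t (r (x i)))) ⊆
      (Finset.univ : Finset (Fin (l + 1) → P)).biUnion (fun u =>
        (Finset.univ : Finset (Equiv.Perm P)).filter
          (fun r => ∀ i, r (Sum.elim x y i) = Sum.elim u (fun i => t (u (i - 1))) i)) := by
    intro r hr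
    simp only [Finset.mem_filter, Finset.mem_univ, true_and, Finset.mem_biUnion] at hr ⊢
    refine ⟨fun i => r (x i), ?_⟩
    rintro (i | i)
    · rfl
    · have := hr (i - 1)
      simpa using this
  refine (Finset.card_le_card hsub).trans ?_
  refine (Finset.card_biUnion_le_card_mul _ _
    ((Fintype.card P - 2 * (l + 1)).factorial) ?_).trans ?_
  · intro u _
    refine (card_perm_prescribed _ _ hxy).trans ?_
    apply le_of_eq
    congr 2
    simp; ring
  · simp

/-- The permutations mapping `W` to a set free of `t`-pairs. -/
def freePerms {P : Type*} [Fintype P] [DecidableEq P] (t : P → P) (W : Finset P) :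
    Finset (Equiv.Perm P) :=
  Finset.univ.filter (fun r => ∀ x ∈ W, ∀ y ∈ W, r y ≠ t (r x))

theorem freePerms_insert {P : Type*} [Fintype P] [DecidableEq P] (t : P → P)
    (ht : Function.Involutive t) (W : Finset P) (a : P) (haW : a ∉ W) :
    ((freePerms t (insert a W)).card : ℝ) * (Fintype.card P - W.card)
      ≤ (freePerms t W).card * (Fintype.card P - 2 * W.card) := by
  classical
  have key : (freePerms t (insert a W) ×ˢ (Wᶜ)).card ≤
      ((freePerms t W).sigma
        (fun r => (W.image r ∪ (W.image r).image t)ᶜ.image r.symm)).card := by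
    apply Finset.card_le_card_of_injOn (fun p => ⟨p.1 * Equiv.swap a p.2, p.2⟩)
    · rintro ⟨r, b⟩ h
      simp only [Finset.coe_product, Set.mem_prod, Finset.mem_coe, Finset.mem_compl, freePerms,
        Finset.mem_filter, Finset.mem_univ, true_and] at h
      obtain ⟨h1, hb⟩ := h
      have hW : ∀ x ∈ W, (r * Equiv.swap a b) x = r x := by
        intro x hx
        rw [Equiv.Perm.mul_apply, Equiv.swap_apply_of_ne_of_ne]
        · rintro rfl; exact haW hx
        · rintro rfl; exact hb hx
      have hbb : (r * Equiv.swap a b) b = r a := by simp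
      simp only [Finset.coe_sigma, Set.mem_sigma_iff, Finset.mem_coe, freePerms,
        Finset.mem_filter, Finset.mem_univ, true_and]
      constructor
      · intro x hx y hy
        rw [hW x hx, hW y hy]
        exact h1 x (Finset.mem_insert_of_mem hx) y (Finset.mem_insert_of_mem hy)
      · rw [Finset.mem_image]
        refine ⟨r a, ?_, (Equiv.symm_apply_eq _).2 hbb.symm⟩
        simp only [Finset.mem_compl, Finset.mem_union, Finset.mem_image, not_or, not_exists,
          not_and]
        constructor
        · intro x hx h
          rw [hW x hx] at h
          exact haW (r.injective h ▸ hx)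
        · rintro _ ⟨x, hx, rfl⟩ h
          rw [hW x hx] at h
          exact h1 x (Finset.mem_insert_of_mem hx) a (Finset.mem_insert_self _ _) h.symm
    · rintro ⟨r, b⟩ _ ⟨r', b'⟩ _ h
      simp only [Sigma.mk.injEq, heq_eq_eq] at h
      obtain ⟨h1, rfl⟩ := h
      simpa using h1
  rw [Finset.card_product, Finset.card_sigma] at key
  have hfib : ∀ r ∈ freePerms t W,
      ((((W.image r ∪ (W.image r).image t)ᶜ.image r.symm).card : ℕ) : ℝ)
        = Fintype.card P - 2 * W.card := by
    intro r hr
    rw [Finset.card_image_of_injective _ r.symm.injective, Finset.card_compl,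
      Nat.cast_sub (Finset.card_le_univ _), Finset.card_union_of_disjoint,
      Finset.card_image_of_injective _ ht.injective, Finset.card_image_of_injective _ r.injective]
    · push_cast; ring
    · rw [Finset.disjoint_left]
      intro p hp hp'
      simp only [Finset.mem_image] at hp hp'
      obtain ⟨y, hy, rfl⟩ := hp
      obtain ⟨_, ⟨x, hx, rfl⟩, h⟩ := hp'
      simp only [freePerms, Finset.mem_filter, Finset.mem_univ, true_and] at hr
      exact hr x hx y hy h.symm
  have key2 : ((freePerms t (insert a W)).card : ℝ) * ((Wᶜ).card : ℕ) ≤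
      ∑ r ∈ freePerms t W, (((W.image r ∪ (W.image r).image t)ᶜ.image r.symm).card : ℝ) := by
    exact_mod_cast key
  rw [Finset.sum_congr rfl hfib, Finset.sum_const, nsmul_eq_mul, Finset.card_compl,
    Nat.cast_sub (Finset.card_le_univ _)] at key2
  exact key2

theorem freePerms_card_le {P : Type*} [Fintype P] [DecidableEq P] (t : P → P)
    (ht : Function.Involutive t) (W : Finset P) :
    ((freePerms t W).card : ℝ) ≤ (Fintype.card P).factorial *
      Real.exp (-((W.card : ℝ) * (W.card - 1) / (2 * Fintype.card P))) := by
  classical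
  induction W using Finset.induction_on with
  | empty =>
    simp only [Finset.card_empty, Nat.cast_zero, zero_mul, zero_div, neg_zero, Real.exp_zero,
      mul_one]
    rw [← Fintype.card_perm]
    exact_mod_cast Finset.card_le_univ _
  | insert a W ha ih =>
    have h := freePerms_insert t ht W a ha
    have hlt : W.card < Fintype.card P := by
      rw [← Finset.card_univ]
      exact Finset.card_lt_card (Finset.ssubset_univ_iff.2 (fun h => ha (h ▸ Finset.mem_univ a)))
    rw [Finset.card_insert_of_notMem ha]
    set N : ℝ := (Fintype.card P : ℝ) with hN
    set w : ℝ := (W.card : ℝ) with hw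
    have hlt' : w < N := by rw [hN, hw]; exact_mod_cast hlt
    have hw0 : 0 ≤ w := by positivity
    have hN0 : 0 < N := by linarith
    have h1 : N - 2 * w ≤ (N - w) * Real.exp (-(w / N)) := by
      have h2 : 1 - w / N ≤ Real.exp (-(w / N)) := by
        have := Real.add_one_le_exp (-(w / N)); linarith
      have h3 : N - 2 * w ≤ (N - w) * (1 - w / N) := by
        have : (N - w) * (1 - w / N) = N - 2 * w + w ^ 2 / N := by
          field_simp; ring
        rw [this]
        have : 0 ≤ w ^ 2 / N := by positivity
        linarith
      exact h3.trans (mul_le_mul_of_nonneg_left h2 (by linarith))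
    have h4 : ((freePerms t (insert a W)).card : ℝ) * (N - w) ≤
        ((freePerms t W).card * Real.exp (-(w / N))) * (N - w) := by
      refine h.trans ?_
      have := mul_le_mul_of_nonneg_left h1 (Nat.cast_nonneg (α := ℝ) (freePerms t W).card)
      linarith
    have h5 := le_of_mul_le_mul_right h4 (by linarith)
    refine h5.trans ((mul_le_mul_of_nonneg_right ih (Real.exp_pos _).le).trans ?_)
    rw [mul_assoc, ← Real.exp_add]
    apply le_of_eq
    congr 2
    push_cast
    rw [← hw]
    field_simp
    ring

end InjHelpers

section InjHelpers2
open Finset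

/-- A cyclic sequence of half-edges for the pairing `m`. -/
def IsBadSeq {V : Type*} {D : ℕ} (m : V × Fin D → V × Fin D) (l : ℕ)
    (q : (Fin (l + 1) → V × Fin D) × (Fin (l + 1) → Fin D)) : Prop :=
  Function.Injective (Sum.elim q.1 (fun i => ((q.1 i).1, q.2 i))) ∧
    ∀ i, ((q.1 (i + 1)).1, q.2 (i + 1)) = m (q.1 i)

theorem pow_mul_factorial_sub_le (N L : ℕ) (h : 4 * L ≤ N) :
    N ^ (2 * L) * (N - 2 * L).factorial ≤ 4 ^ L * N.factorial := by
  have h1 := Nat.factorial_mul_descFactorial (show 2 * L ≤ N by omega)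
  have h2 := Nat.pow_sub_le_descFactorial N (2 * L)
  have h3 : N ^ (2 * L) ≤ 2 ^ (2 * L) * (N + 1 - 2 * L) ^ (2 * L) := by
    rw [← mul_pow]
    exact Nat.pow_le_pow_left (by omega) _
  calc N ^ (2 * L) * (N - 2 * L).factorial
      ≤ (2 ^ (2 * L) * N.descFactorial (2 * L)) * (N - 2 * L).factorial := by
        gcongr
        exact h3.trans (by gcongr)
    _ = 2 ^ (2 * L) * ((N - 2 * L).factorial * N.descFactorial (2 * L)) := by ring
    _ = 4 ^ L * N.factorial := by rw [h1, pow_mul]; norm_num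

/-- The random pairing attached to a permutation. -/
def pairMap {P : Type*} (t : P → P) (r : Equiv.Perm P) (x : P) : P := r.symm (t (r x))

open Classical in
/-- Number of bad sequences. -/
noncomputable def numBad {V : Type*} [Fintype V] {D : ℕ} (m : V × Fin D → V × Fin D) (g : ℕ) : ℕ :=
  ∑ l ∈ Finset.range g, (Finset.univ.filter (fun q => IsBadSeq m l q)).card

theorem sum_numBad_le {V : Type*} [Fintype V] [DecidableEq V] {D : ℕ}
    (t : V × Fin D → V × Fin D) (g : ℕ)
    (hg : 4 * g ≤ Fintype.card (V × Fin D)) :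
    ∑ r : Equiv.Perm (V × Fin D), numBad (pairMap t r) g ≤
      (∑ l ∈ Finset.range g, (4 * D) ^ (l + 1)) * (Fintype.card (V × Fin D)).factorial := by
  classical
  unfold numBad
  rw [Finset.sum_comm, Finset.sum_mul]
  apply Finset.sum_le_sum
  intro l hl
  rw [Finset.mem_range] at hl
  set N := Fintype.card (V × Fin D) with hN
  have e1 : ∑ r : Equiv.Perm (V × Fin D),
      (Finset.univ.filter (fun q => IsBadSeq (pairMap t r) l q)).card =
      ∑ q : (Fin (l + 1) → V × Fin D) × (Fin (l + 1) → Fin D),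
        (Finset.univ.filter (fun r : Equiv.Perm (V × Fin D) =>
          IsBadSeq (pairMap t r) l q)).card := by
    simp only [Finset.card_filter]
    exact Finset.sum_comm
  rw [e1]
  have e2 : ∀ q : (Fin (l + 1) → V × Fin D) × (Fin (l + 1) → Fin D),
      (Finset.univ.filter (fun r : Equiv.Perm (V × Fin D) =>
          IsBadSeq (pairMap t r) l q)).card ≤ N ^ (l + 1) * (N - 2 * (l + 1)).factorial := by
    intro q
    by_cases hq : Function.Injective (Sum.elim q.1 (fun i => ((q.1 i).1, q.2 i)))
    · refine (Finset.card_le_card ?_).trans (card_perm_cycle t l _ _ hq)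
      intro r hr
      simp only [Finset.mem_filter, Finset.mem_univ, true_and] at hr ⊢
      intro i
      rw [hr.2 i]
      simp [pairMap]
    · rw [Finset.filter_false_of_mem]
      · simp
      · intro r _ h
        exact hq h.1
  refine (Finset.sum_le_sum (fun q _ => e2 q)).trans ?_
  rw [Finset.sum_const, Finset.card_univ, Fintype.card_prod, Fintype.card_fun, Fintype.card_fun,
    ← hN, Fintype.card_fin, Fintype.card_fin, smul_eq_mul]
  have := pow_mul_factorial_sub_le N (l + 1) (by omega)
  calc _ = D ^ (l + 1) * (N ^ (2 * (l + 1)) * (N - 2 * (l + 1)).factorial) := by ring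
    _ ≤ D ^ (l + 1) * (4 ^ (l + 1) * N.factorial) := by gcongr
    _ = _ := by rw [mul_pow]; ring

theorem exists_good_perm {V : Type*} [Fintype V] [DecidableEq V] {D : ℕ}
    (t : V × Fin D → V × Fin D) (ht : Function.Involutive t) (g s : ℕ)
    (hg : 4 * g ≤ Fintype.card (V × Fin D))
    (hs : ((Fintype.card V).choose s : ℝ) * Real.exp (-(((s * D : ℕ) : ℝ) * ((s * D : ℕ) - 1) /
      (2 * Fintype.card (V × Fin D)))) < 1 / 2) :
    ∃ r : Equiv.Perm (V × Fin D),
      numBad (pairMap t r) g ≤ 2 * (∑ l ∈ Finset.range g, (4 * D) ^ (l + 1)) ∧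
      ∀ S : Finset V, S.card = s → r ∉ freePerms t (S ×ˢ Finset.univ) := by
  classical
  set C := ∑ l ∈ Finset.range g, (4 * D) ^ (l + 1) with hC
  set F := (Fintype.card (V × Fin D)).factorial with hF
  have hFpos : 0 < F := Nat.factorial_pos _
  set A := (Finset.univ : Finset (Equiv.Perm (V × Fin D))).filter
    (fun r => 2 * C + 1 ≤ numBad (pairMap t r) g) with hA
  set B := (Finset.powersetCard s (Finset.univ : Finset V)).biUnion
    (fun S => freePerms t (S ×ˢ Finset.univ)) with hB
  have hAc : A.card * (2 * C + 1) ≤ C * F := by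
    calc A.card * (2 * C + 1) = ∑ r ∈ A, (2 * C + 1) := by simp
      _ ≤ ∑ r ∈ A, numBad (pairMap t r) g :=
        Finset.sum_le_sum (fun r hr => (Finset.mem_filter.1 hr).2)
      _ ≤ ∑ r, numBad (pairMap t r) g :=
        Finset.sum_le_sum_of_subset (Finset.subset_univ _)
      _ ≤ C * F := sum_numBad_le t g hg
  have hA2 : (A.card : ℝ) < F / 2 := by
    have h1 : (A.card : ℝ) * (2 * C + 1) ≤ C * F := by exact_mod_cast hAc
    have h2 : (0 : ℝ) < F := by exact_mod_cast hFpos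
    have h3 : (0 : ℝ) ≤ C := by positivity
    by_contra hcon
    push Not at hcon
    nlinarith
  have hB2 : (B.card : ℝ) < F / 2 := by
    have h1 : (B.card : ℝ) ≤ ∑ S ∈ Finset.powersetCard s (Finset.univ : Finset V),
        ((freePerms t (S ×ˢ (Finset.univ : Finset (Fin D)))).card : ℝ) := by
      exact_mod_cast Finset.card_biUnion_le
    have h2 : ∀ S ∈ Finset.powersetCard s (Finset.univ : Finset V),
        ((freePerms t (S ×ˢ (Finset.univ : Finset (Fin D)))).card : ℝ) ≤
        F * Real.exp (-(((s * D : ℕ) : ℝ) * ((s * D : ℕ) - 1) /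
          (2 * Fintype.card (V × Fin D)))) := by
      intro S hS
      have := freePerms_card_le t ht (S ×ˢ (Finset.univ : Finset (Fin D)))
      rw [Finset.card_product, (Finset.mem_powersetCard.1 hS).2, Finset.card_univ,
        Fintype.card_fin] at this
      exact this
    have h3 := h1.trans (Finset.sum_le_sum h2)
    rw [Finset.sum_const, Finset.card_powersetCard, Finset.card_univ, nsmul_eq_mul] at h3
    have h4 : (0 : ℝ) < F := by exact_mod_cast hFpos
    nlinarith
  have hAB : (A ∪ B).card < (Finset.univ : Finset (Equiv.Perm (V × Fin D))).card := by
    rw [Finset.card_univ, Fintype.card_perm, ← hF]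
    have : ((A ∪ B).card : ℝ) ≤ A.card + B.card := by exact_mod_cast Finset.card_union_le A B
    have : ((A ∪ B).card : ℝ) < F := by linarith
    exact_mod_cast this
  obtain ⟨r, -, hr⟩ := Finset.exists_mem_notMem_of_card_lt_card hAB
  rw [Finset.mem_union, not_or] at hr
  refine ⟨r, ?_, ?_⟩
  · have := hr.1
    simp only [hA, Finset.mem_filter, Finset.mem_univ, true_and] at this
    omega
  · intro S hS h
    apply hr.2
    rw [hB, Finset.mem_biUnion]
    exact ⟨S, Finset.mem_powersetCard.2 ⟨Finset.subset_univ _, hS⟩, h⟩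

/-- The deterministic construction. -/
theorem graph_of_pairing {V : Type*} [Fintype V] [DecidableEq V] {D : ℕ}
    (m : V × Fin D → V × Fin D) (hm : Function.Involutive m) (hm0 : ∀ x, m x ≠ x)
    (g s : ℕ) (hg : 3 ≤ g) (Bd : Finset (V × Fin D))
    (hBd : ∀ l < g, ∀ q, IsBadSeq m l q → q.1 0 ∈ Bd)
    (hs : ∀ S : Finset V, S.card = s → ∃ x y, x.1 ∈ S ∧ y.1 ∈ S ∧ y = m x) :
    ∃ G : SimpleGraph V, (∀ v, (G.neighborSet v).ncard ≤ D) ∧ (g : ℕ∞) ≤ G.egirth ∧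
      Fintype.card V * D ≤ 2 * (injChromIndex G * (s + Bd.card)) + 2 * Bd.card := by
  classical
  have hloop : ∀ x, x ∉ Bd → x.1 ≠ (m x).1 := by
    intro x hx h
    apply hx
    have := hBd 0 (by omega) (fun _ => x, fun _ => (m x).2) ?_
    · simpa using this
    · constructor
      · rintro (i | i) (j | j) hij
        · congr 1; exact Fin.ext (by omega)
        · simp only [Sum.elim_inl, Sum.elim_inr, h] at hij
          exact absurd hij.symm (hm0 x)
        · simp only [Sum.elim_inl, Sum.elim_inr, h] at hij
          exact absurd hij (hm0 x)
        · congr 1; exact Fin.ext (by omega)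
      · intro i
        simp [h]
  let G : SimpleGraph V :=
    { Adj := fun u v => u ≠ v ∧ ∃ x, x.1 = u ∧ (m x).1 = v ∧ x ∉ Bd ∧ m x ∉ Bd
      symm := ⟨by
        rintro u v ⟨h, x, h1, h2, h3, h4⟩
        exact ⟨h.symm, m x, h2, by rw [hm x]; exact h1, h4, by rw [hm x]; exact h3⟩⟩
      loopless := ⟨fun u h => h.1 rfl⟩ }
  have hAdj : ∀ u v, G.Adj u v ↔ u ≠ v ∧ ∃ x, x.1 = u ∧ (m x).1 = v ∧ x ∉ Bd ∧ m x ∉ Bd :=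
    fun u v => Iff.rfl
  refine ⟨G, ?_, ?_, ?_⟩
  · intro v
    have hsub : G.neighborSet v ⊆
        ((Finset.univ.image (fun i : Fin D => (m (v, i)).1) : Finset V) : Set V) := by
      intro u hu
      rw [SimpleGraph.mem_neighborSet, hAdj] at hu
      obtain ⟨_, x, h1, h2, _⟩ := hu
      simp only [Finset.coe_image, Finset.coe_univ, Set.image_univ, Set.mem_range]
      exact ⟨x.2, by rw [← h1]; exact h2⟩
    refine (Set.ncard_le_ncard hsub (Finset.finite_toSet _)).trans ?_
    rw [Set.ncard_coe_finset]
    exact Finset.card_image_le.trans (by simp)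
  · rw [SimpleGraph.le_egirth]
    intro a w hw
    by_contra hlt
    push Not at hlt
    have hlt' : w.length < g := by exact_mod_cast hlt
    have h3 := hw.three_le_length
    obtain ⟨l, hl⟩ : ∃ l, w.length = l + 1 := ⟨w.length - 1, by omega⟩
    let v : Fin (l + 1) → V := fun i => w.getVert i
    have hvinj : Function.Injective v := by
      intro i j hij
      have := hw.getVert_injOn' (show (i : ℕ) ∈ _ from ?_) (show (j : ℕ) ∈ _ from ?_) hij
      · exact Fin.ext this
      · simp only [Set.mem_ofPred_eq]; omega
      · simp only [Set.mem_ofPred_eq]; omega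
    have hvadj : ∀ i, G.Adj (v i) (v (i + 1)) := by
      intro i
      have h := w.adj_getVert_succ (i := i) (by omega)
      by_cases hi : i = Fin.last l
      · subst hi
        have e : v (Fin.last l + 1) = w.getVert (l + 1) := by
          simp only [v, Fin.last_add_one, Fin.val_zero, SimpleGraph.Walk.getVert_zero]
          rw [← hl, SimpleGraph.Walk.getVert_length]
        rw [e]; exact h
      · have e : v (i + 1) = w.getVert ((i : ℕ) + 1) := by
          simp only [v]
          rw [Fin.val_add_one_of_lt (Fin.lt_last_iff_ne_last.2 hi)]
        rw [e]; exact h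
    choose hne x hx1 hx2 hx3 hx4 using fun i => (hAdj _ _).1 (hvadj i)
    have hy : ∀ i, (m (x (i - 1))).1 = (x i).1 := by
      intro i; rw [hx2, hx1]; simp
    have hye : ∀ i, ((x i).1, (m (x (i - 1))).2) = m (x (i - 1)) := by
      intro i; rw [← hy]
    apply hx3 0
    refine hBd l (by omega) (x, fun i => (m (x (i - 1))).2) ⟨?_, ?_⟩
    · have hxinj : Function.Injective x := by
        intro i j h
        apply hvinj
        rw [← hx1, ← hx1, h]
      have hcross : ∀ i j, x i ≠ m (x (j - 1)) := by
        intro i j h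
        have hij : i = j := by
          apply hvinj
          rw [← hx1, ← hx1, h, hy]
        subst hij
        have h5 : m (x i) = x (i - 1) := by rw [h, hm]
        have h6 : v (i + 1) = v (i - 1) := by rw [← hx2, ← hx1, h5]
        have h7 := hvinj h6
        have h8 : (1 : Fin (l + 1)) + 1 = 0 := by
          have : i + 1 + 1 = i := by rw [h7]; simp
          have h9 : i + (1 + 1) = i + 0 := by rw [← add_assoc, this, add_zero]
          exact add_left_cancel h9
        have h10 := congrArg Fin.val h8
        have h11 : ((1 : Fin (l + 1)) : ℕ) = 1 := by
          rw [Fin.val_one', Nat.mod_eq_of_lt (by omega)]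
        rw [Fin.val_add, h11, Fin.val_zero, Nat.mod_eq_of_lt (by omega)] at h10
        omega
      rintro (i | i) (j | j) hij
      · exact congrArg Sum.inl (hxinj hij)
      · simp only [Sum.elim_inl, Sum.elim_inr, hye] at hij
        exact absurd hij (hcross _ _)
      · simp only [Sum.elim_inl, Sum.elim_inr, hye] at hij
        exact absurd hij.symm (hcross _ _)
      · simp only [Sum.elim_inr, hye] at hij
        have := hxinj (hm.injective hij)
        exact congrArg Sum.inr (sub_left_injective this)
    · intro i
      have := hye (i + 1)
      simpa using this
  · obtain ⟨f, hf⟩ := injChromIndex_spec G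
    have hE := inj_edges_le G f hf (s + Bd.card) (by
      intro S hS
      by_contra hcon
      push Not at hcon
      have h1 : s ≤ (S \ Bd.image Prod.fst).card := by
        have h2 := Finset.le_card_sdiff (Bd.image Prod.fst) S
        have h3 : (Bd.image Prod.fst).card ≤ Bd.card := Finset.card_image_le
        omega
      obtain ⟨T, hT, hTc⟩ := Finset.exists_subset_card_eq h1
      obtain ⟨x, y, hx, hy, hxy⟩ := hs T hTc
      have hnb : ∀ z : V × Fin D, z.1 ∈ T → z.1 ∈ S ∧ z ∉ Bd := by
        intro z hz
        have := Finset.mem_sdiff.1 (hT hz)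
        exact ⟨this.1, fun h => this.2 (Finset.mem_image_of_mem _ h)⟩
      subst hxy
      exact hS _ (hnb x hx).1 _ (hnb _ hy).1
        ⟨hloop x (hnb x hx).2, x, rfl, rfl, (hnb x hx).2, (hnb _ hy).2⟩)
    set good := (Finset.univ : Finset (V × Fin D)).filter (fun x => x ∉ Bd ∧ m x ∉ Bd) with hgood
    have hg1 : Fintype.card V * D ≤ good.card + 2 * Bd.card := by
      have hsub : (Finset.univ : Finset (V × Fin D)) ⊆ good ∪ (Bd ∪ Bd.image m) := by
        intro x _
        simp only [hgood, Finset.mem_union, Finset.mem_filter, Finset.mem_univ, true_and,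
          Finset.mem_image]
        by_cases h1 : x ∈ Bd
        · exact Or.inr (Or.inl h1)
        · by_cases h2 : m x ∈ Bd
          · exact Or.inr (Or.inr ⟨m x, h2, hm x⟩)
          · exact Or.inl ⟨h1, h2⟩
      have h1 := Finset.card_le_card hsub
      have h2 := Finset.card_union_le good (Bd ∪ Bd.image m)
      have h3 := Finset.card_union_le Bd (Bd.image m)
      have h4 : (Bd.image m).card ≤ Bd.card := Finset.card_image_le
      rw [Finset.card_univ, Fintype.card_prod, Fintype.card_fin] at h1
      omega
    have hg2 : good.card ≤ Fintype.card G.Dart := by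
      rw [← Fintype.card_coe]
      have hgm : ∀ x : good, x.1 ∉ Bd ∧ m x.1 ∉ Bd := fun x => (Finset.mem_filter.1 x.2).2
      refine Fintype.card_le_of_injective (fun x : good =>
        (⟨(x.1.1, (m x.1).1), hloop x.1 (hgm x).1, x.1, rfl, rfl, (hgm x).1, (hgm x).2⟩ :
          G.Dart)) ?_
      rintro ⟨x, hx⟩ ⟨x', hx'⟩ h
      have hb := hgm ⟨x, hx⟩
      have hb' := hgm ⟨x', hx'⟩
      simp only [SimpleGraph.Dart.mk.injEq, Prod.mk.injEq] at h hb hb'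
      obtain ⟨h1, h2⟩ := h
      apply Subtype.ext
      change x = x'
      by_contra hne
      apply hb.1
      have hmne : m x ≠ m x' := fun h => hne (hm.injective h)
      have e1 : ((x.1, x'.2) : V × Fin D) = x' := by rw [h1]
      have e2 : (((m x').1, (m x).2) : V × Fin D) = m x := by rw [← h2]
      have l1 := hloop x hb.1
      have l2 := hloop x' hb'.1
      have n1 : x ≠ m x' := fun h => l2 (by rw [← h1, h])
      have n2 : x' ≠ m x := fun h => l1 (by rw [h1, ← h])
      have := hBd 1 (by omega) (![x, m x'], ![x'.2, (m x).2]) ?_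
      · simpa using this
      · constructor
        · have k1 := hm0 x
          have k2 := hm0 x'
          rintro (i | i) (j | j) hij <;> fin_cases i <;> fin_cases j <;>
            first
            | rfl
            | (exfalso
               simp [e1, e2, hne, hmne, n1, n2, k1, k2, Ne.symm hne, hmne.symm, n1.symm,
                 n2.symm, k1.symm, k2.symm] at hij)
        · intro i
          fin_cases i
          · simpa using e2
          · simp [e1, hm x']
    rw [SimpleGraph.dart_card_eq_twice_card_edges] at hg2
    have h1 : G.edgeSet.ncard = G.edgeFinset.card := by
      rw [← SimpleGraph.coe_edgeFinset, Set.ncard_coe_finset]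
    rw [h1] at hE
    omega

end InjHelpers2

section InjHelpers3
open Finset

theorem num_ineq (D : ℕ) (hD : 3 ≤ D) :
    1 < (D : ℝ) * (2 * Real.log D / (D - 1)) / 2 + Real.log (2 * Real.log D / (D - 1)) := by
  have he := Real.exp_one_lt_d9
  rcases Nat.eq_or_lt_of_le hD with h | h
  · subst h
    have hL : 1 < Real.log 3 := by
      rw [Real.lt_log_iff_exp_lt (by norm_num)]; linarith
    have h2 : 0 < Real.log (Real.log 3) := Real.log_pos hL
    have e : 2 * Real.log ((3 : ℕ) : ℝ) / (((3 : ℕ) : ℝ) - 1) = Real.log 3 := by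
      push_cast; ring
    rw [e]
    push_cast
    linarith
  · have hD4 : (4 : ℝ) ≤ D := by exact_mod_cast h
    have h4 : Real.log 4 = 2 * Real.log 2 := by
      rw [show (4 : ℝ) = 2 ^ 2 by norm_num, Real.log_pow]; norm_num
    have hL4 : Real.log 4 ≤ Real.log D := Real.log_le_log (by norm_num) hD4
    have hl2 := Real.log_two_gt_d9
    have hL : Real.exp 1 < 2 * Real.log D := by linarith
    have h1 : 1 < Real.log (2 * Real.log D) := by
      rw [Real.lt_log_iff_exp_lt (by linarith)]; exact hL
    rw [Real.log_div (by linarith) (by linarith)]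
    have h2 : Real.log ((D : ℝ) - 1) ≤ Real.log D := Real.log_le_log (by linarith) (by linarith)
    have h3 : Real.log D ≤ (D : ℝ) * (2 * Real.log D / (D - 1)) / 2 := by
      have : (D : ℝ) * (2 * Real.log D / (D - 1)) / 2 = Real.log D * (D / (D - 1)) := by ring
      rw [this]
      apply le_mul_of_one_le_right (by linarith)
      rw [le_div_iff₀ (by linarith)]
      linarith
    linarith

theorem exists_beta (D : ℕ) (hD : 3 ≤ D) :
    ∃ b : ℝ, 0 < b ∧ b < 2 * Real.log D / (D - 1) ∧ 1 < (D : ℝ) * b / 2 + Real.log b := by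
  set b0 := 2 * Real.log D / ((D : ℝ) - 1) with hb0
  have hD' : (3 : ℝ) ≤ D := by exact_mod_cast hD
  have hpos : 0 < b0 := by
    apply div_pos _ (by linarith)
    have := Real.log_pos (show (1 : ℝ) < D by linarith)
    linarith
  have hc : ContinuousAt (fun b : ℝ => (D : ℝ) * b / 2 + Real.log b) b0 := by
    apply ContinuousAt.add
    · fun_prop
    · exact Real.continuousAt_log hpos.ne'
  have h1 := hc.eventually (lt_mem_nhds (num_ineq D hD))
  have h2 : ∀ᶠ b in nhdsWithin b0 (Set.Iio b0), 1 < (D : ℝ) * b / 2 + Real.log b :=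
    h1.filter_mono nhdsWithin_le_nhds
  have h3 : ∀ᶠ b in nhdsWithin b0 (Set.Iio b0), 0 < b :=
    (lt_mem_nhds hpos).filter_mono nhdsWithin_le_nhds
  have h4 : ∀ᶠ b in nhdsWithin b0 (Set.Iio b0), b < b0 := self_mem_nhdsWithin
  obtain ⟨b, hb⟩ := (h2.and (h3.and h4)).exists
  exact ⟨b, hb.2.1, hb.2.2, hb.1⟩

theorem choose_exp_bound (D n s : ℕ) (b d : ℝ) (hD : 0 < D) (hn : 0 < n) (hb : 0 < b)
    (hd : d = (D : ℝ) * b / 2 + Real.log b - 1) (hd0 : 0 < d) (hs : b * n ≤ s)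
    (hn1 : 1 ≤ d * n) (hn2 : 2 ≤ b * d * n) :
    (n.choose s : ℝ) * Real.exp (-(((s * D : ℕ) : ℝ) * ((s * D : ℕ) - 1) /
      (2 * (n * D : ℕ)))) < 1 / 2 := by
  have hnR : (0 : ℝ) < n := by exact_mod_cast hn
  have hDR : (0 : ℝ) < D := by exact_mod_cast hD
  have hsR : (0 : ℝ) < s := lt_of_lt_of_le (by positivity) hs
  have h1 : (n.choose s : ℝ) ≤ Real.exp (s * (1 - Real.log b)) := by
    have h2 : (n.choose s : ℝ) ≤ (n : ℝ) ^ s / s.factorial := Nat.choose_le_pow_div s n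
    have h3 : (s : ℝ) ^ s / s.factorial ≤ Real.exp s := Real.pow_div_factorial_le_exp _ hsR.le s
    have h4 : (n : ℝ) ≤ s * b⁻¹ := by
      rw [← div_eq_mul_inv, le_div_iff₀ hb]; linarith
    have h5 : Real.exp (-Real.log b) = b⁻¹ := by rw [Real.exp_neg, Real.exp_log hb]
    calc (n.choose s : ℝ) ≤ (n : ℝ) ^ s / s.factorial := h2
      _ ≤ (s * b⁻¹) ^ s / s.factorial := by gcongr
      _ = (s : ℝ) ^ s / s.factorial * (b⁻¹) ^ s := by rw [mul_pow]; ring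
      _ ≤ Real.exp s * (b⁻¹) ^ s := by gcongr
      _ = Real.exp (s * (1 - Real.log b)) := by
        rw [← h5, ← Real.exp_nat_mul, ← Real.exp_add]
        congr 1; ring
  have h6 : ((s * D : ℕ) : ℝ) * ((s * D : ℕ) - 1) / (2 * (n * D : ℕ)) =
      s * ((s / n) * D / 2) - s * (1 / (2 * n)) := by
    push_cast
    field_simp
  have h7 : b ≤ s / n := by rw [le_div_iff₀ hnR]; exact hs
  have h8 : 1 / (2 * (n : ℝ)) ≤ d / 2 := by
    rw [div_le_iff₀ (by positivity)]; linarith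
  have h9 : (s : ℝ) * (1 - Real.log b) + (-(((s * D : ℕ) : ℝ) * ((s * D : ℕ) - 1) /
      (2 * (n * D : ℕ)))) ≤ -1 := by
    rw [h6]
    have a1 : (s : ℝ) * (b * D / 2) ≤ s * ((s / n) * D / 2) := by gcongr
    have a2 : (s : ℝ) * (1 / (2 * n)) ≤ s * (d / 2) := by gcongr
    have a3 : (b * n) * (d / 2) ≤ s * (d / 2) := by gcongr
    have a4 : Real.log b = d - D * b / 2 + 1 := by rw [hd]; ring
    rw [a4]
    nlinarith
  calc _ ≤ Real.exp (s * (1 - Real.log b)) * Real.exp (-(((s * D : ℕ) : ℝ) * ((s * D : ℕ) - 1) /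
      (2 * (n * D : ℕ)))) := by gcongr
    _ ≤ Real.exp (-1) := by rw [← Real.exp_add]; exact Real.exp_le_exp.2 h9
    _ < 1 / 2 := by
      rw [Real.exp_neg, one_div]
      apply inv_strictAnti₀ (by norm_num)
      linarith [Real.exp_one_gt_d9]

end InjHelpers3

/-- Proposition 5: for every `Δ ≥ 3` and `g ≥ 3` there is a graph with maximum degree
at most `Δ` and girth at least `g` whose injective chromatic index is at least
`Δ(Δ-1)/(4 ln Δ)`. -/
theorem exists_graph_large_injChromIndex (Δ g : ℕ) (hΔ : 3 ≤ Δ) (hg : 3 ≤ g) :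
    ∃ (n : ℕ) (G : SimpleGraph (Fin n)),
      (∀ v, (G.neighborSet v).ncard ≤ Δ) ∧
      (g : ℕ∞) ≤ G.egirth ∧
      ((Δ : ℝ) * (Δ - 1)) / (4 * Real.log Δ) ≤ injChromIndex G := by
  classical
  obtain ⟨b, hb0, hb1, hb2⟩ := exists_beta Δ hΔ
  have hD : (3 : ℝ) ≤ Δ := by exact_mod_cast hΔ
  set L := Real.log Δ with hL
  have hLpos : 0 < L := Real.log_pos (by linarith)
  set d := (Δ : ℝ) * b / 2 + Real.log b - 1 with hd
  have hd0 : 0 < d := by rw [hd]; linarith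
  set C := 2 * (∑ l ∈ Finset.range g, (4 * Δ) ^ (l + 1)) with hC
  set K := ((Δ : ℝ) * (Δ - 1)) / (4 * L) with hK
  have hK0 : 0 < K := by
    apply div_pos (mul_pos (by linarith) (by linarith)) (by linarith)
  have hgap : 0 < (Δ : ℝ) - 2 * K * b := by
    have h1 : 2 * K * b < 2 * K * (2 * L / (Δ - 1)) := by gcongr
    have h2 : 2 * K * (2 * L / (Δ - 1)) = Δ := by
      rw [hK]
      have : (Δ : ℝ) - 1 ≠ 0 := by linarith
      field_simp
      ring
    linarith
  obtain ⟨m, hm⟩ := exists_nat_gt (1 / d + 2 / (b * d) + 4 * g +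
    (2 * K * (1 + C) + 2 * C) / (Δ - 2 * K * b))
  have p1 : 0 < 1 / d := by positivity
  have p2 : 0 < 2 / (b * d) := by positivity
  have p3 : (0 : ℝ) ≤ 4 * g := by positivity
  have p4 : 0 ≤ (2 * K * (1 + C) + 2 * C) / (Δ - 2 * K * b) := by positivity
  have hnm : ((2 * m : ℕ) : ℝ) = 2 * m := by push_cast; ring
  set n := 2 * m with hn
  have hmn : (m : ℝ) ≤ n := by rw [hnm]; linarith [Nat.cast_nonneg (α := ℝ) m]
  have hn0 : 0 < n := by
    have : (0 : ℝ) < n := by linarith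
    exact_mod_cast this
  have hn1 : 1 ≤ d * n := by
    have : 1 / d ≤ n := by linarith
    rw [div_le_iff₀ hd0] at this; linarith
  have hn2 : 2 ≤ b * d * n := by
    have : 2 / (b * d) ≤ n := by linarith
    rw [div_le_iff₀ (by positivity)] at this; linarith
  have hn3 : 4 * g ≤ n := by
    have : (4 : ℝ) * g ≤ n := by linarith
    exact_mod_cast this
  have hn4 : (2 * K * (1 + C) + 2 * C) < (Δ - 2 * K * b) * n := by
    have : (2 * K * (1 + C) + 2 * C) / (Δ - 2 * K * b) < n := by linarith
    rw [div_lt_iff₀ hgap] at this; linarith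
  set s := ⌈b * n⌉₊ with hs
  have hs1 : b * n ≤ s := Nat.le_ceil _
  have hs2 : (s : ℝ) ≤ b * n + 1 := (Nat.ceil_lt_add_one (by positivity)).le
  let t : Fin n × Fin Δ → Fin n × Fin Δ := fun x => (x.1.rev, x.2)
  have ht : Function.Involutive t := by
    intro x; simp [t]
  have ht0 : ∀ x, t x ≠ x := by
    intro x h
    have h1 := congrArg (fun z => (z.1 : ℕ)) h
    simp only [t, Fin.val_rev] at h1
    have := x.1.2
    omega
  obtain ⟨r, hr1, hr2⟩ := exists_good_perm t ht g s
    (by rw [Fintype.card_prod, Fintype.card_fin, Fintype.card_fin]; nlinarith)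
    (by
      have := choose_exp_bound Δ n s b d (by omega) hn0 hb0 hd hd0 hs1 hn1 hn2
      rw [Fintype.card_prod, Fintype.card_fin, Fintype.card_fin]
      exact this)
  set Bd : Finset (Fin n × Fin Δ) := (Finset.range g).biUnion (fun l =>
    (Finset.univ.filter (fun q => IsBadSeq (pairMap t r) l q)).image (fun q => q.1 0)) with hBd
  have hBdc : Bd.card ≤ C := by
    refine le_trans ?_ hr1
    refine Finset.card_biUnion_le.trans ?_
    unfold numBad
    apply Finset.sum_le_sum
    intro l _
    refine Finset.card_image_le.trans (le_of_eq ?_)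
    congr
  obtain ⟨G, hG1, hG2, hG3⟩ := graph_of_pairing (pairMap t r)
    (by intro x; simp [pairMap, ht (r x)])
    (by
      intro x h
      apply ht0 (r x)
      rw [pairMap, Equiv.symm_apply_eq] at h
      exact h)
    g s hg Bd
    (by
      intro l hl q hq
      rw [hBd, Finset.mem_biUnion]
      exact ⟨l, Finset.mem_range.2 hl, Finset.mem_image.2 ⟨q, by simpa using hq, rfl⟩⟩)
    (by
      intro S hS
      have := hr2 S hS
      simp only [freePerms, Finset.mem_filter, Finset.mem_univ, true_and] at this
      push Not at this
      obtain ⟨x, hx, y, hy, h⟩ := this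
      refine ⟨x, y, (Finset.mem_product.1 hx).1, (Finset.mem_product.1 hy).1, ?_⟩
      rw [pairMap, ← h]; simp)
  refine ⟨n, G, hG1, hG2, ?_⟩
  by_contra hcon
  push Not at hcon
  rw [Fintype.card_fin] at hG3
  have h1 : (n : ℝ) * Δ ≤ 2 * (injChromIndex G * (s + Bd.card)) + 2 * Bd.card := by
    exact_mod_cast hG3
  have h2 : (Bd.card : ℝ) ≤ C := by exact_mod_cast hBdc
  have h3 : (injChromIndex G : ℝ) * (s + Bd.card) ≤ K * (b * n + 1 + C) := by
    apply mul_le_mul hcon.le (by linarith) (by positivity) hK0.le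
  nlinarith
end

section
/- For every integer Δ ≥ 21 and every integer g ≥ 3, there exists a Δ-regular bipartite finite simple graph G with girth at least g and with both parts of the same size n, such that every induced matching in G has fewer than ⌈3 n ln Δ / Δ⌉ edges; consequently, the strong chromatic index satisfies χ'_s(G) > Δ²/(3 ln Δ). -/
open SimpleGraph

/-- Two distinct edges of `G` are at distance at most 1 if they share an endpoint or
some endpoint of one is adjacent to some endpoint of the other. -/
def StrongConflict {V : Type*} (G : SimpleGraph V) (e₁ e₂ : Sym2 V) : Prop :=
  e₁ ≠ e₂ ∧ ∃ u ∈ e₁, ∃ v ∈ e₂, u = v ∨ G.Adj u v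

/-- A strong edge-coloring of `G` with `k` colors: any two distinct edges at distance
at most 1 get distinct colors. -/
def IsStrongEdgeColoring {V : Type*} (G : SimpleGraph V) {k : ℕ} (f : Sym2 V → Fin k) : Prop :=
  ∀ e₁ ∈ G.edgeSet, ∀ e₂ ∈ G.edgeSet, StrongConflict G e₁ e₂ → f e₁ ≠ f e₂

/-- The strong chromatic index of `G`. -/
noncomputable def sChromIndex {V : Type*} (G : SimpleGraph V) : ℕ :=
  sInf {k : ℕ | ∃ f : Sym2 V → Fin k, IsStrongEdgeColoring G f}

/-- An induced matching of `G`: a set of edges of `G`, any two distinct members of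
which are at distance at least 2. -/
def IsInducedMatching {V : Type*} (G : SimpleGraph V) (M : Set (Sym2 V)) : Prop :=
  M ⊆ G.edgeSet ∧ ∀ e₁ ∈ M, ∀ e₂ ∈ M, ¬ StrongConflict G e₁ e₂

namespace RB
open Equiv

theorem isChain_edges_map {V' V : Type*} {G' : SimpleGraph V'} {G : SimpleGraph V} (φ : G' →g G)
    (hφ : ∀ u v w, G'.Adj u v → G'.Adj u w → φ v = φ w → v = w) {u v : V'} (w : G'.Walk u v)
    (hw : w.edges.Nodup) : List.IsChain (· ≠ ·) (w.map φ).edges := by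
  induction w with
  | nil => simp
  | cons h p ih =>
    cases p with
    | nil => simp
    | cons h' q =>
      simp only [Walk.edges_cons, List.nodup_cons, Walk.map_cons, List.isChain_cons_cons] at hw ih ⊢
      refine ⟨?_, ih hw.2⟩
      intro heq
      have := hφ _ _ _ h.symm h' (by
        rw [Sym2.eq_swap] at heq
        exact Sym2.congr_right.mp heq)
      subst this
      exact hw.1 (by simp [Sym2.eq_swap])

/-- A cycle upstairs projects, along a locally injective homomorphism, to a closed walk
whose edges contain a cycle. -/
theorem exists_cycle_of_map {V' V : Type*} {G' : SimpleGraph V'} {G : SimpleGraph V} (φ : G' →g G)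
    (hφ : ∀ u v w, G'.Adj u v → G'.Adj u w → φ v = φ w → v = w) {u : V'} (w : G'.Walk u u)
    (hw : w.IsCycle) : ∃ (x : V) (C : G.Walk x x), C.IsCycle ∧ C.edges ⊆ (w.map φ).edges := by
  classical
  by_contra hcon
  push Not at hcon
  set H : SimpleGraph V := SimpleGraph.fromEdgeSet {e | e ∈ (w.map φ).edges} with hH
  have hHG : ∀ e ∈ H.edgeSet, e ∈ (w.map φ).edges := by
    intro e he
    rw [hH, SimpleGraph.edgeSet_fromEdgeSet] at he
    exact he.1
  have hac : H.IsAcyclic := by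
    intro x C hC
    have h1 : ∀ e ∈ C.edges, e ∈ G.edgeSet := fun e he =>
      (w.map φ).edges_subset_edgeSet (hHG e (C.edges_subset_edgeSet he))
    refine hcon x (C.transfer G h1) (hC.transfer h1) ?_
    rw [Walk.edges_transfer]
    intro e he
    exact hHG e (C.edges_subset_edgeSet he)
  have h2 : ∀ e ∈ (w.map φ).edges, e ∈ H.edgeSet := by
    intro e he
    rw [hH, SimpleGraph.edgeSet_fromEdgeSet]
    exact ⟨he, G.not_isDiag_of_mem_edgeSet ((w.map φ).edges_subset_edgeSet he)⟩
  have hp : ((w.map φ).transfer H h2).IsPath := by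
    rw [hac.isPath_iff_isChain, Walk.edges_transfer]
    exact isChain_edges_map φ hφ w hw.edges_nodup
  rw [Walk.isPath_iff_nil, ← Walk.length_eq_zero_iff] at hp
  have h3 := hp
  simp only [Walk.length_transfer, Walk.length_map] at h3
  have := hw.three_le_length
  omega

theorem cycle_length_le {V : Type*} {G : SimpleGraph V} {x : V} {C : G.Walk x x} (hC : C.IsCycle)
    {l : List (Sym2 V)} (h : C.edges ⊆ l) : C.length ≤ l.length := by
  rw [← Walk.length_edges]
  exact (List.subperm_of_subset hC.edges_nodup h).length_le

theorem egirth_le_of_hom {V' V : Type*} {G' : SimpleGraph V'} {G : SimpleGraph V} (φ : G' →g G)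
    (hφ : ∀ u v w, G'.Adj u v → G'.Adj u w → φ v = φ w → v = w) : G.egirth ≤ G'.egirth := by
  rw [le_egirth]
  intro a w hw
  obtain ⟨x, C, hC, hs⟩ := exists_cycle_of_map φ hφ w hw
  refine (egirth_le_length hC).trans ?_
  have := cycle_length_le hC hs
  simp only [Walk.length_edges, Walk.length_map] at this
  exact_mod_cast this

/-- The bipartite graph of a family of permutations, with the edges at the left vertices in `B`
deleted. -/
def bG {Δ : ℕ} {A : Type} (σ : Fin Δ → Perm A) (B : Set A) : SimpleGraph (A ⊕ A) where
  Adj u v := ∃ a i, a ∉ B ∧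
    ((u = .inl a ∧ v = .inr (σ i a)) ∨ (v = .inl a ∧ u = .inr (σ i a)))
  symm := ⟨by
    rintro u v ⟨a, i, ha, h⟩
    exact ⟨a, i, ha, h.symm⟩⟩
  loopless := ⟨by
    rintro u ⟨a, i, ha, ⟨h1, h2⟩ | ⟨h1, h2⟩⟩ <;> simp [h1] at h2⟩

/-- Simplicity outside `B`: distinct colors give distinct edges. -/
def Simp {Δ : ℕ} {A : Type} (σ : Fin Δ → Perm A) (B : Set A) : Prop :=
  ∀ a ∉ B, ∀ i j, σ i a = σ j a → i = j

open Classical in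
noncomputable def volt {Δ : ℕ} {A : Type} (B : Set A) (i : Fin Δ) (a : A) :
    Fin Δ × A → ZMod 2 := if a ∈ B then Pi.single (i, a) 1 else 0

noncomputable def lift {Δ : ℕ} {A : Type} (σ : Fin Δ → Perm A) (B : Set A) (i : Fin Δ) :
    Perm (A × (Fin Δ × A → ZMod 2)) where
  toFun p := (σ i p.1, p.2 + volt B i p.1)
  invFun p := ((σ i).symm p.1, p.2 - volt B i ((σ i).symm p.1))
  left_inv p := by simp
  right_inv p := by simp

theorem lift_apply {Δ : ℕ} {A : Type} (σ : Fin Δ → Perm A) (B : Set A) (i : Fin Δ)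
    (p : A × (Fin Δ × A → ZMod 2)) : lift σ B i p = (σ i p.1, p.2 + volt B i p.1) := rfl

theorem lift_simp {Δ : ℕ} {A : Type} (σ : Fin Δ → Perm A) (B : Set A) (h : Simp σ B) :
    Simp (lift σ B) ∅ := by
  classical
  rintro ⟨a, γ⟩ - i j hij
  simp only [lift_apply, Prod.mk.injEq, add_right_inj] at hij
  by_cases ha : a ∈ B
  · have h2 := hij.2
    simp only [volt, ha, if_true] at h2
    have h3 := congrFun h2 (i, a)
    by_contra hne
    simp [hne] at h3
  · exact h a ha i j hij.1

/-- The projection of the lift. -/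
def proj {Δ : ℕ} {A : Type} (σ : Fin Δ → Perm A) (B C : Set A) :
    bG (lift σ B) (Prod.fst ⁻¹' C) →g bG σ C where
  toFun := Sum.map Prod.fst Prod.fst
  map_rel' := by
    rintro u v ⟨a, i, ha, ⟨rfl, rfl⟩ | ⟨rfl, rfl⟩⟩
    · exact ⟨a.1, i, ha, Or.inl ⟨rfl, rfl⟩⟩
    · exact ⟨a.1, i, ha, Or.inr ⟨rfl, rfl⟩⟩

theorem proj_inj {Δ : ℕ} {A : Type} (σ : Fin Δ → Perm A) (B C : Set A) (h : Simp σ C) :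
    ∀ u v w, (bG (lift σ B) (Prod.fst ⁻¹' C)).Adj u v → (bG (lift σ B) (Prod.fst ⁻¹' C)).Adj u w →
      proj σ B C v = proj σ B C w → v = w := by
  rintro u v w ⟨⟨a, γ⟩, i, ha, ⟨rfl, rfl⟩ | ⟨rfl, rfl⟩⟩ ⟨⟨a', γ'⟩, j, ha', ⟨h1, rfl⟩ | ⟨rfl, h1⟩⟩ heq
  · cases h1
    have h2 : σ i a = σ j a := by simpa [proj, lift_apply] using heq
    rw [h a ha i j h2]
  · simp at h1
  · simp at h1
  · have h2 : a = a' := by simpa [proj] using heq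
    subst h2
    simp only [lift_apply, Sum.inr.injEq, Prod.mk.injEq] at h1
    have := h a ha i j h1.1
    subst this
    simpa using h1.2

open Classical in
/-- The change of the `(i,a)` coordinate along a walk in the lift counts traversals
of the corresponding edge. -/
theorem parity {Δ : ℕ} {A : Type} (σ : Fin Δ → Perm A) (B : Set A) (h : Simp σ ∅)
    (a : A) (ha : a ∈ B) (i : Fin Δ) {u v} (w : (bG (lift σ B) (Prod.fst ⁻¹' ∅)).Walk u v) :
    Sum.elim Prod.snd Prod.snd v (i, a) = Sum.elim Prod.snd Prod.snd u (i, a) +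
      (((w.map (proj σ B ∅)).edges.count s(.inl a, .inr (σ i a)) : ℕ) : ZMod 2) := by
  classical
  induction w with
  | nil => simp
  | @cons x y z hxy p ih =>
    rw [ih]
    simp only [Walk.map_cons, Walk.edges_cons, List.count_cons]
    have key : Sum.elim Prod.snd Prod.snd y (i, a) = Sum.elim Prod.snd Prod.snd x (i, a) +
        (if s(proj σ B ∅ x, proj σ B ∅ y) = s(.inl a, .inr (σ i a)) then (1 : ZMod 2) else 0) := by
      have aux : ∀ (a' : A) (γ : Fin Δ × A → ZMod 2) (j : Fin Δ), volt B j a' (i, a) =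
          if s((Sum.inl a' : A ⊕ A), Sum.inr (σ j a')) = s(.inl a, .inr (σ i a))
            then (1 : ZMod 2) else 0 := by
        intro a' γ j
        by_cases hh : a' = a ∧ j = i
        · obtain ⟨rfl, rfl⟩ := hh
          simp [volt, ha]
        · rw [if_neg]
          · unfold volt
            split_ifs
            · rw [Pi.single_apply, if_neg]
              rintro heq
              simp only [Prod.mk.injEq] at heq
              exact hh ⟨heq.2.symm, heq.1.symm⟩
            · rfl
          · intro heq
            simp only [Sym2.eq_iff, Sum.inl.injEq, Sum.inr.injEq, reduceCtorEq, and_false,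
              or_false] at heq
            obtain ⟨rfl, h2⟩ := heq
            exact hh ⟨rfl, h a' (by simp) _ _ h2⟩
      obtain ⟨⟨a', γ⟩, j, -, ⟨rfl, rfl⟩ | ⟨rfl, rfl⟩⟩ := hxy
      · have h4 := aux a' γ j
        have h3 : s(proj σ B ∅ (Sum.inl (a', γ)), proj σ B ∅ (Sum.inr (lift σ B j (a', γ))))
          = s((Sum.inl a' : A ⊕ A), Sum.inr (σ j a')) := rfl
        by_cases hq : s((Sum.inl a' : A ⊕ A), Sum.inr (σ j a')) = s(.inl a, .inr (σ i a))
        · rw [if_pos hq] at h4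
          rw [if_pos (h3.trans hq)]
          simp [lift_apply, h4]
        · rw [if_neg hq] at h4
          rw [if_neg (h3 ▸ hq)]
          simp [lift_apply, h4]
      · have h4 := aux a' γ j
        have h3 : s(proj σ B ∅ (Sum.inr (lift σ B j (a', γ))), proj σ B ∅ (Sum.inl (a', γ)))
          = s((Sum.inl a' : A ⊕ A), Sum.inr (σ j a')) := Sym2.eq_swap
        by_cases hq : s((Sum.inl a' : A ⊕ A), Sum.inr (σ j a')) = s(.inl a, .inr (σ i a))
        · rw [if_pos hq] at h4
          rw [if_pos (h3.trans hq)]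
          simp [lift_apply, h4, add_assoc, CharTwo.add_self_eq_zero]
        · rw [if_neg hq] at h4
          rw [if_neg (h3 ▸ hq)]
          simp [lift_apply, h4]
    rw [key]
    by_cases hc : s(proj σ B ∅ x, proj σ B ∅ y) = s(.inl a, .inr (σ i a))
    · simp [hc]; ring
    · simp [hc]

theorem girth_step {Δ : ℕ} {A : Type} (σ : Fin Δ → Perm A) (B : Set A) (h : Simp σ ∅) (g j : ℕ)
    (hB : (g : ℕ∞) ≤ (bG σ B).egirth) (hj : (j : ℕ∞) ≤ (bG σ ∅).egirth) (hjg : j < g) :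
    ((j + 1 : ℕ) : ℕ∞) ≤ (bG (lift σ B) ∅).egirth := by
  classical
  change ((j + 1 : ℕ) : ℕ∞) ≤ (bG (lift σ B) (Prod.fst ⁻¹' ∅)).egirth
  rw [le_egirth]
  intro u w hw
  obtain ⟨x, C, hC, hs⟩ := exists_cycle_of_map (proj σ B ∅) (proj_inj σ B ∅ h) w hw
  have hjC : j ≤ C.length := by exact_mod_cast hj.trans (egirth_le_length hC)
  have hCw := cycle_length_le hC hs
  have hwl : (w.map (proj σ B ∅)).edges.length = w.length := by simp
  rw [hwl] at hCw
  by_contra hlt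
  have hlt' : w.length < j + 1 := by
    rw [not_le] at hlt; exact_mod_cast hlt
  have hsp := List.subperm_of_subset hC.edges_nodup hs
  have hperm : C.edges.Perm (w.map (proj σ B ∅)).edges := by
    apply hsp.perm_of_length_le
    rw [hwl, Walk.length_edges]; omega
  -- some edge of `C` meets `B`
  have hex : ∃ e ∈ C.edges, e ∉ (bG σ B).edgeSet := by
    by_contra hno
    push Not at hno
    have := hB.trans (egirth_le_length (hC.transfer hno))
    rw [Walk.length_transfer] at this
    have : g ≤ C.length := by exact_mod_cast this
    omega
  obtain ⟨e, he, heB⟩ := hex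
  have heG := C.edges_subset_edgeSet he
  obtain ⟨a, i, ha, rfl⟩ : ∃ a i, a ∈ B ∧ e = s(.inl a, .inr (σ i a)) := by
    induction e using Sym2.ind with
    | _ p q =>
      obtain ⟨a, i, -, hh⟩ := heG
      have haB : a ∈ B := by
        by_contra hc
        exact heB ⟨a, i, hc, hh⟩
      refine ⟨a, i, haB, ?_⟩
      rcases hh with ⟨rfl, rfl⟩ | ⟨rfl, rfl⟩
      · rfl
      · exact Sym2.eq_swap
  have hpar := parity σ B h a ha i w
  rw [List.count_eq_one_of_mem (hperm.nodup_iff.mp hC.edges_nodup) (hs he)] at hpar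
  simp at hpar

/-- No large induced matching outside `B`. -/
def NoIM {Δ : ℕ} {A : Type} (σ : Fin Δ → Perm A) (B : Set A) (t : ℝ) : Prop :=
  ∀ (X : Finset A) (f : A → Fin Δ), (∀ x ∈ X, x ∉ B) →
    (∀ x ∈ X, ∀ x' ∈ X, ∀ i, σ i x = σ (f x') x' → x = x') → (X.card : ℝ) ≤ t

theorem lift_noIM {Δ : ℕ} {A : Type} [Fintype A] (σ : Fin Δ → Perm A) (B : Set A) (t : ℝ)
    (h : NoIM σ B t) :
    NoIM (lift σ B) (Prod.fst ⁻¹' B) (t * Nat.card (Fin Δ × A → ZMod 2)) := by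
  classical
  intro X f hXB hX
  have h1 : X.card = ∑ γ : Fin Δ × A → ZMod 2, (X.filter (fun p => p.2 = γ)).card :=
    Finset.card_eq_sum_card_fiberwise (fun _ _ => Finset.mem_univ _)
  rw [h1, Nat.card_eq_fintype_card, mul_comm, ← nsmul_eq_mul, ← Finset.card_univ]
  push_cast
  apply Finset.sum_le_card_nsmul
  intro γ _
  have h2 : (X.filter (fun p => p.2 = γ)).card
      = ((X.filter (fun p => p.2 = γ)).image Prod.fst).card := by
    rw [Finset.card_image_of_injOn]
    rintro ⟨a, b⟩ hp ⟨c, d⟩ hq heq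
    simp only [Finset.coe_filter, Set.mem_ofPred_eq] at hp hq
    simp only at heq
    rw [heq, hp.2, hq.2]
  rw [h2]
  have hm : ∀ x, x ∈ (X.filter (fun p => p.2 = γ)).image Prod.fst ↔ (x, γ) ∈ X := by
    intro x
    simp
  apply h _ (fun a => f (a, γ))
  · intro x hx
    exact hXB _ ((hm x).1 hx)
  · intro x hx x' hx' i hi
    rw [hm] at hx hx'
    have hb := hXB _ hx
    have hb' := hXB _ hx'
    simp only [Set.mem_preimage] at hb hb'
    have := hX _ hx _ hx' i (by simp [lift_apply, volt, hb, hb', hi])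
    simpa using this

end RB
namespace RB
open Equiv

structure Good {Δ : ℕ} {A : Type} [Fintype A] (g : ℕ) (y : ℝ) (σ : Fin Δ → Perm A) (B : Set A) :
    Prop where
  simpB : Simp σ B
  girB : (g : ℕ∞) ≤ (bG σ B).egirth
  noim : NoIM σ B (y * Fintype.card A)
  cardB : (B.ncard : ℝ) * (2 * Δ) < Fintype.card A

theorem Simp.mono {Δ : ℕ} {A : Type} {σ : Fin Δ → Perm A} {B C : Set A} (h : Simp σ B)
    (hBC : B ⊆ C) : Simp σ C := fun a ha => h a (fun hb => ha (hBC hb))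

theorem good_lift {Δ : ℕ} {A : Type} [Fintype A] [DecidableEq A] {g : ℕ} {y : ℝ}
    {σ : Fin Δ → Perm A} {B : Set A} (h : Good g y σ B) :
    Good g y (lift σ B) (Prod.fst ⁻¹' B) where
  simpB := (lift_simp σ B h.simpB).mono (Set.empty_subset _)
  girB := h.girB.trans (egirth_le_of_hom (proj σ B B) (proj_inj σ B B h.simpB))
  noim := by
    have := lift_noIM σ B _ h.noim
    rwa [mul_assoc, ← Nat.card_eq_fintype_card, ← Nat.cast_mul, ← Nat.card_prod,
      Nat.card_eq_fintype_card] at this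
  cardB := by
    have h1 : (Prod.fst ⁻¹' B : Set (A × (Fin Δ × A → ZMod 2))) = B ×ˢ Set.univ := by
      ext; simp
    rw [h1, Set.ncard_prod, Set.ncard_univ, Nat.card_eq_fintype_card, Fintype.card_prod]
    push_cast
    have h2 : (0 : ℝ) < Fintype.card (Fin Δ × A → ZMod 2) := by
      exact_mod_cast Fintype.card_pos
    have := mul_lt_mul_of_pos_right h.cardB h2
    linarith

theorem tower {Δ : ℕ} {A : Type} [Fintype A] {g : ℕ} {y : ℝ}
    {σ : Fin Δ → Perm A} {B : Set A} (h : Good g y σ B) (j : ℕ) (hj : j ≤ g) :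
    ∃ (A' : Type) (_ : Fintype A') (σ' : Fin Δ → Perm A') (B' : Set A'),
      Good g y σ' B' ∧ Simp σ' ∅ ∧ (j : ℕ∞) ≤ (bG σ' ∅).egirth := by
  classical
  induction j with
  | zero =>
    exact ⟨_, inferInstance, _, _, good_lift h, lift_simp σ B h.simpB, by simp⟩
  | succ j ih =>
    obtain ⟨A', _, σ', B', hG, hS, hg⟩ := ih (by omega)
    exact ⟨_, inferInstance, _, _, good_lift hG, lift_simp σ' B' hG.simpB,
      girth_step σ' B' hS g j hG.girB hg (by omega)⟩

theorem to_fin {Δ : ℕ} {A : Type} [Fintype A] {g : ℕ} {y : ℝ}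
    {σ : Fin Δ → Perm A} {B : Set A} (h : Good g y σ B) (hS : Simp σ ∅)
    (hg : (g : ℕ∞) ≤ (bG σ ∅).egirth) :
    ∃ (n : ℕ) (σ : Fin Δ → Perm (Fin n)) (B : Set (Fin n)), Simp σ ∅ ∧
      (g : ℕ∞) ≤ (bG σ ∅).egirth ∧ NoIM σ B (y * n) ∧ (B.ncard : ℝ) * (2 * Δ) < n := by
  classical
  let e := Fintype.equivFin A
  refine ⟨Fintype.card A, fun i => e.permCongr (σ i), e '' B, ?_, ?_, ?_, ?_⟩
  · intro a _ i j hij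
    simp only [Equiv.permCongr_apply, EmbeddingLike.apply_eq_iff_eq] at hij
    exact hS _ (by simp) i j hij
  · refine hg.trans (egirth_le_of_hom ⟨Sum.map e.symm e.symm, ?_⟩ ?_)
    · rintro u v ⟨a, i, -, ⟨rfl, rfl⟩ | ⟨rfl, rfl⟩⟩
      · exact ⟨e.symm a, i, by simp, Or.inl ⟨rfl, by simp [Equiv.permCongr_apply]⟩⟩
      · exact ⟨e.symm a, i, by simp, Or.inr ⟨rfl, by simp [Equiv.permCongr_apply]⟩⟩
    · intro u v w _ _ hvw
      exact Sum.map_injective.2 ⟨e.symm.injective, e.symm.injective⟩ hvw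
  · intro X f hX hM
    have := h.noim (X.map e.symm.toEmbedding) (f ∘ e) ?_ ?_
    · simpa using this
    · intro x hx hxB
      rw [Finset.mem_map_equiv] at hx
      exact hX _ hx ⟨x, hxB, by simp⟩
    · intro x hx x' hx' i hi
      rw [Finset.mem_map_equiv] at hx hx'
      have := hM _ hx _ hx' i (by simpa [Equiv.permCongr_apply] using hi)
      simpa using this
  · rw [Set.ncard_image_of_injective _ e.injective]
    exact h.cardB

theorem matching_bound {Δ n : ℕ} (hΔ : 0 < Δ) {t : ℝ} (σ : Fin Δ → Perm (Fin n)) (B : Set (Fin n))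
    (h : NoIM σ B t) (M : Set (Sym2 (Fin n ⊕ Fin n)))
    (hM : IsInducedMatching (bG σ ∅) M) : (M.ncard : ℝ) ≤ t + B.ncard := by
  classical
  have : Nonempty (Fin Δ) := ⟨⟨0, hΔ⟩⟩
  let X : Finset (Fin n) := Finset.univ.filter fun x => ∃ i, s(Sum.inl x, Sum.inr (σ i x)) ∈ M
  have hX : ∀ x ∈ X, ∃ i, s(Sum.inl x, Sum.inr (σ i x)) ∈ M := by
    intro x hx
    simpa [X] using hx
  choose! f hf using hX
  have h1 : M ⊆ ↑(X.image fun x => s((Sum.inl x : Fin n ⊕ Fin n), Sum.inr (σ (f x) x))) := by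
    intro e he
    have heG := hM.1 he
    obtain ⟨a, i, rfl⟩ : ∃ a i, e = s(Sum.inl a, Sum.inr (σ i a)) := by
      induction e using Sym2.ind with
      | _ p q =>
        obtain ⟨a, i, -, hh⟩ := heG
        refine ⟨a, i, ?_⟩
        rcases hh with ⟨rfl, rfl⟩ | ⟨rfl, rfl⟩
        · rfl
        · exact Sym2.eq_swap
    have haX : a ∈ X := by
      simp only [X, Finset.mem_filter, Finset.mem_univ, true_and]
      exact ⟨i, he⟩
    rw [Finset.coe_image]
    refine ⟨a, haX, ?_⟩
    by_contra hne
    refine hM.2 _ (hf a haX) _ he ⟨hne, Sum.inl a, by simp, Sum.inl a, by simp, Or.inl rfl⟩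
  have h2 : M.ncard ≤ X.card := by
    refine (Set.ncard_le_ncard h1 (Finset.finite_toSet _)).trans ?_
    rw [Set.ncard_coe_finset]
    exact Finset.card_image_le
  have h3 := h (X.filter (fun x => x ∉ B)) f (by simp) (by
    intro x hx x' hx' i hi
    by_contra hne
    have hx := (Finset.mem_filter.1 hx).1
    have hx' := (Finset.mem_filter.1 hx').1
    refine hM.2 _ (hf x hx) _ (hf x' hx') ⟨?_, Sum.inl x, by simp, Sum.inr (σ (f x') x'), by simp,
      Or.inr ⟨x, i, by simp, Or.inl ⟨rfl, by rw [hi]⟩⟩⟩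
    intro heq
    simp only [Sym2.eq_iff, Sum.inl.injEq, reduceCtorEq, and_false, or_false] at heq
    exact hne heq.1)
  have h4 : (X.filter (fun x => x ∈ B)).card ≤ B.ncard := by
    rw [← Set.ncard_coe_finset]
    refine Set.ncard_le_ncard ?_ (Set.toFinite _)
    intro x hx
    simp only [Finset.coe_filter, Set.mem_ofPred_eq] at hx
    exact hx.2
  have h5 := Finset.card_filter_add_card_filter_not (s := X) (fun x => x ∈ B)
  have h6 : (M.ncard : ℝ) ≤ X.card := by exact_mod_cast h2
  have h7 : ((X.filter (fun x => x ∈ B)).card : ℝ) ≤ B.ncard := by exact_mod_cast h4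
  have h8 : ((X.filter (fun x => x ∈ B)).card : ℝ) + (X.filter (fun x => x ∉ B)).card = X.card := by
    exact_mod_cast h5
  linarith

theorem degree_eq {Δ n : ℕ} (σ : Fin Δ → Perm (Fin n)) (hS : Simp σ ∅) (v : Fin n ⊕ Fin n) :
    ((bG σ ∅).neighborSet v).ncard = Δ := by
  rcases v with a | b
  · have : (bG σ ∅).neighborSet (.inl a) = Set.range fun i => Sum.inr (σ i a) := by
      ext w
      simp only [SimpleGraph.mem_neighborSet, Set.mem_range]
      constructor
      · rintro ⟨a', i, -, ⟨h1, rfl⟩ | ⟨rfl, h1⟩⟩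
        · cases h1; exact ⟨i, rfl⟩
        · cases h1
      · rintro ⟨i, rfl⟩
        exact ⟨a, i, by simp, Or.inl ⟨rfl, rfl⟩⟩
    rw [this, ← Set.image_univ, Set.ncard_image_of_injective, Set.ncard_univ, Nat.card_fin]
    intro i j hij
    exact hS a (by simp) i j (by simpa using hij)
  · have : (bG σ ∅).neighborSet (.inr b) = Set.range fun i => Sum.inl ((σ i).symm b) := by
      ext w
      simp only [SimpleGraph.mem_neighborSet, Set.mem_range]
      constructor
      · rintro ⟨a', i, -, ⟨h1, rfl⟩ | ⟨rfl, h1⟩⟩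
        · cases h1
        · cases h1; exact ⟨i, by simp⟩
      · rintro ⟨i, rfl⟩
        exact ⟨(σ i).symm b, i, by simp, Or.inr ⟨rfl, by simp⟩⟩
    rw [this, ← Set.image_univ, Set.ncard_image_of_injective, Set.ncard_univ, Nat.card_fin]
    intro i j hij
    have hij : (σ i).symm b = (σ j).symm b := by simpa using hij
    refine hS ((σ i).symm b) (by simp) i j ?_
    conv_rhs => rw [hij]
    simp

theorem chrom_bound {Δ n : ℕ} (hn : 0 < n) (σ : Fin Δ → Perm (Fin n)) (hS : Simp σ ∅)
    (T : ℝ) (hT : ∀ M, IsInducedMatching (bG σ ∅) M → (M.ncard : ℝ) < T) :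
    (n : ℝ) * Δ < sChromIndex (bG σ ∅) * T := by
  classical
  have hne : {k : ℕ | ∃ f : Sym2 (Fin n ⊕ Fin n) → Fin k,
      IsStrongEdgeColoring (bG σ ∅) f}.Nonempty := by
    refine ⟨_, Fintype.equivFin _, ?_⟩
    intro e₁ _ e₂ _ hc heq
    exact hc.1 ((Fintype.equivFin _).injective heq)
  obtain ⟨f, hf⟩ := Nat.sInf_mem hne
  change IsStrongEdgeColoring (k := sChromIndex (bG σ ∅)) (bG σ ∅) f at hf
  set k := sChromIndex (bG σ ∅) with hk
  change Sym2 (Fin n ⊕ Fin n) → Fin k at f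
  let E : Fin n × Fin Δ → Sym2 (Fin n ⊕ Fin n) := fun p => s(Sum.inl p.1, Sum.inr (σ p.2 p.1))
  have hE : Function.Injective E := by
    rintro ⟨a, i⟩ ⟨b, j⟩ h
    simp only [E, Sym2.eq_iff, Sum.inl.injEq, Sum.inr.injEq, reduceCtorEq, and_false,
      or_false] at h
    obtain ⟨rfl, h⟩ := h
    rw [hS a (by simp) _ _ h]
  have hEm : ∀ p, E p ∈ (bG σ ∅).edgeSet := fun p => ⟨p.1, p.2, by simp, Or.inl ⟨rfl, rfl⟩⟩
  have hcount : (Finset.univ : Finset (Fin n × Fin Δ)).card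
      = ∑ c : Fin k, (Finset.univ.filter fun p => f (E p) = c).card :=
    Finset.card_eq_sum_card_fiberwise (fun _ _ => Finset.mem_univ _)
  have hcl : ∀ c : Fin k, ((Finset.univ.filter fun p => f (E p) = c).card : ℝ) < T := by
    intro c
    have := hT {e | e ∈ (bG σ ∅).edgeSet ∧ f e = c} ⟨fun e he => he.1, by
      intro e₁ h₁ e₂ h₂ hc
      exact hf e₁ h₁.1 e₂ h₂.1 hc (h₁.2.trans h₂.2.symm)⟩
    refine lt_of_le_of_lt ?_ this
    refine Nat.cast_le.2 ?_
    rw [← Finset.card_image_of_injective _ hE, ← Set.ncard_coe_finset]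
    refine Set.ncard_le_ncard ?_ (Set.toFinite _)
    intro e he
    simp only [Finset.coe_image, Finset.coe_filter, Finset.mem_univ, true_and] at he
    obtain ⟨p, hp, rfl⟩ := he
    exact ⟨hEm p, hp⟩
  have hne' : (Finset.univ : Finset (Fin k)).Nonempty :=
    ⟨f s(Sum.inl ⟨0, hn⟩, Sum.inl ⟨0, hn⟩), Finset.mem_univ _⟩
  have h9 : (n : ℝ) * Δ = ∑ c : Fin k, ((Finset.univ.filter fun p => f (E p) = c).card : ℝ) := by
    have : n * Δ = (Finset.univ : Finset (Fin n × Fin Δ)).card := by simp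
    rw [hcount] at this
    exact_mod_cast this
  rw [h9]
  refine (Finset.sum_lt_sum_of_nonempty hne' (fun c _ => hcl c)).trans_le ?_
  simp

/-- Reduction of the theorem to the existence of a base family of permutations. -/
theorem reduction (Δ g : ℕ) (hΔ : 21 ≤ Δ)
    (base : ∃ (n : ℕ) (σ : Fin Δ → Perm (Fin n)) (B : Set (Fin n)),
      Good g ((3 * Real.log Δ - 1 / 2) / Δ) σ B) :
    ∃ (n : ℕ) (G : SimpleGraph (Fin n ⊕ Fin n)),
      (∀ a b : Fin n, ¬ G.Adj (Sum.inl a) (Sum.inl b)) ∧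
      (∀ a b : Fin n, ¬ G.Adj (Sum.inr a) (Sum.inr b)) ∧
      (∀ v, (G.neighborSet v).ncard = Δ) ∧
      (g : ℕ∞) ≤ G.egirth ∧
      (∀ M : Set (Sym2 (Fin n ⊕ Fin n)), IsInducedMatching G M →
        M.ncard < ⌈(3 : ℝ) * n * Real.log Δ / Δ⌉₊) ∧
      ((Δ : ℝ) ^ 2 / (3 * Real.log Δ) < (sChromIndex G : ℝ)) := by
  obtain ⟨n₀, σ₀, B₀, h₀⟩ := base
  obtain ⟨A', _, σ', B', hG, hS, hg⟩ := tower h₀ g le_rfl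
  obtain ⟨n, σ, B, hS, hg, hN, hB⟩ := to_fin hG hS hg
  have hΔ0 : (0 : ℝ) < Δ := by
    have : 0 < Δ := by omega
    exact_mod_cast this
  have hn : (0 : ℝ) < n := lt_of_le_of_lt (by positivity) hB
  have hL : 0 < Real.log Δ := Real.log_pos (by
    have : 1 < Δ := by omega
    exact_mod_cast this)
  have hT : ∀ M, IsInducedMatching (bG σ ∅) M →
      (M.ncard : ℝ) < (3 : ℝ) * n * Real.log Δ / Δ := by
    intro M hM
    refine (matching_bound (by omega) σ B hN M hM).trans_lt ?_
    rw [lt_div_iff₀ hΔ0, add_mul]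
    have : (3 * Real.log Δ - 1 / 2) / Δ * n * Δ = (3 * Real.log Δ - 1 / 2) * n := by
      field_simp
    rw [this]
    linarith
  refine ⟨n, bG σ ∅, ?_, ?_, degree_eq σ hS, hg, ?_, ?_⟩
  · rintro a b ⟨_, _, _, ⟨h1, h2⟩ | ⟨h1, h2⟩⟩ <;> cases h2
  · rintro a b ⟨_, _, _, ⟨h1, h2⟩ | ⟨h1, h2⟩⟩ <;> cases h1
  · intro M hM
    rw [Nat.lt_ceil]
    exact hT M hM
  · have := chrom_bound (by exact_mod_cast hn) σ hS _ hT
    rw [div_lt_iff₀ (by positivity)]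
    rw [← mul_div_assoc, lt_div_iff₀ hΔ0] at this
    refine lt_of_mul_lt_mul_left ?_ hn.le
    linarith

end RB
namespace RB
open Equiv

/-- Permutations mapping `X` outside `Y`. -/
def avoidSet {n : ℕ} (X Y : Finset (Fin n)) : Finset (Perm (Fin n)) :=
  Finset.univ.filter fun π => ∀ x ∈ X, π x ∉ Y

theorem avoid_symm {n : ℕ} (X Y : Finset (Fin n)) {x x' : Fin n} (hx : x ∉ X) (hx' : x' ∉ X) :
    (avoidSet (insert x X) Y).card ≤ (avoidSet (insert x' X) Y).card := by
  apply Finset.card_le_card_of_injOn (fun π => π * swap x x')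
  · intro π hπ
    simp only [avoidSet, Finset.coe_filter, Finset.mem_univ, true_and, Finset.mem_insert,
      forall_eq_or_imp, Set.mem_ofPred_eq, Perm.mul_apply, swap_apply_right] at hπ ⊢
    refine ⟨hπ.1, fun z hz => ?_⟩
    rw [swap_apply_of_ne_of_ne]
    · exact hπ.2 z hz
    · rintro rfl; exact hx hz
    · rintro rfl; exact hx' hz
  · intro π _ π' _ h
    exact mul_right_cancel h

theorem avoid_count {n : ℕ} (X Y : Finset (Fin n)) {x : Fin n} (hx : x ∉ X) :
    (((avoidSet (insert x X) Y).card : ℕ) : ℝ) * (n - X.card) ≤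
      (avoidSet X Y).card * ((n : ℝ) - Y.card - X.card) := by
  classical
  have h1 : (Xᶜ).card • (avoidSet (insert x X) Y).card
      ≤ ∑ x' ∈ Xᶜ, (avoidSet (insert x' X) Y).card := by
    apply Finset.card_nsmul_le_sum
    intro x' hx'
    exact avoid_symm X Y hx (Finset.mem_compl.1 hx')
  have h2 : ∑ x' ∈ Xᶜ, (avoidSet (insert x' X) Y).card
      = ∑ π ∈ avoidSet X Y, (Xᶜ.filter fun x' => π x' ∉ Y).card := by
    refine Eq.trans ?_ (Finset.sum_card_bipartiteAbove_eq_sum_card_bipartiteBelow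
      (s := Xᶜ) (t := avoidSet X Y) (fun (x' : Fin n) (π : Perm (Fin n)) => π x' ∉ Y))
    refine Finset.sum_congr rfl fun x' _ => ?_
    congr 1
    ext π
    simp only [avoidSet, Finset.mem_filter, Finset.mem_univ, true_and, Finset.mem_insert,
      forall_eq_or_imp, Finset.bipartiteAbove]
    tauto
  have h3 : ∀ π ∈ avoidSet X Y,
      ((Xᶜ.filter fun x' => π x' ∉ Y).card : ℝ) = (n : ℝ) - Y.card - X.card := by
    intro π hπ
    simp only [avoidSet, Finset.mem_filter, Finset.mem_univ, true_and] at hπ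
    have h4 : (Finset.univ.filter fun x' => π x' ∉ Y) = (Xᶜ.filter fun x' => π x' ∉ Y) ∪ X := by
      ext z
      simp only [Finset.mem_filter, Finset.mem_univ, true_and, Finset.mem_union, Finset.mem_compl]
      constructor
      · intro h; by_cases hz : z ∈ X <;> tauto
      · rintro (h | h)
        · exact h.2
        · exact hπ z h
    have h5 : (Finset.univ.filter fun x' => π x' ∉ Y).card = (Yᶜ).card := by
      rw [← Finset.card_map π.toEmbedding]
      congr 1
      ext z
      simp [Finset.mem_map_equiv]
    rw [h4, Finset.card_union_of_disjoint, Finset.card_compl, Fintype.card_fin] at h5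
    · have h6 : Y.card ≤ n := by simpa using Finset.card_le_univ Y
      have : ((Xᶜ.filter fun x' => π x' ∉ Y).card : ℝ) + X.card = ((n - Y.card : ℕ) : ℝ) := by
        exact_mod_cast h5
      rw [Nat.cast_sub h6] at this
      linarith
    · rw [Finset.disjoint_left]
      intro z hz hz'
      simp only [Finset.mem_filter, Finset.mem_compl] at hz
      exact hz.1 hz'
  rw [h2, Finset.card_compl, Fintype.card_fin, smul_eq_mul] at h1
  have h7 : X.card ≤ n := by simpa using Finset.card_le_univ X
  have h8 : (((n - X.card : ℕ) : ℝ)) * (avoidSet (insert x X) Y).card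
      ≤ ∑ π ∈ avoidSet X Y, ((Xᶜ.filter fun x' => π x' ∉ Y).card : ℝ) := by exact_mod_cast h1
  rw [Finset.sum_congr rfl h3, Finset.sum_const, nsmul_eq_mul, Nat.cast_sub h7] at h8
  linarith

theorem avoid_bound {n : ℕ} (hn : 0 < n) (X Y : Finset (Fin n)) :
    ((avoidSet X Y).card : ℝ) ≤ n.factorial * (1 - (Y.card : ℝ) / n) ^ X.card := by
  classical
  have hn' : (0 : ℝ) < n := by exact_mod_cast hn
  have hY : (Y.card : ℝ) ≤ n := by exact_mod_cast (by simpa using Finset.card_le_univ Y)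
  have hr : 0 ≤ 1 - (Y.card : ℝ) / n := by
    rw [sub_nonneg, div_le_one hn']; exact hY
  induction X using Finset.induction_on with
  | empty =>
    simp [avoidSet, Fintype.card_perm]
  | insert x X hx ih =>
    rw [Finset.card_insert_of_notMem hx, pow_succ, ← mul_assoc]
    have h1 := avoid_count X Y hx
    have hXlt : X.card < n := by
      have : (insert x X).card ≤ n := by simpa using Finset.card_le_univ (insert x X)
      rw [Finset.card_insert_of_notMem hx] at this
      omega
    have hX : (0 : ℝ) < n - X.card := by
      rw [sub_pos]; exact_mod_cast hXlt
    have h2 : ((avoidSet (insert x X) Y).card : ℝ) ≤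
        (avoidSet X Y).card * (1 - (Y.card : ℝ) / n) := by
      refine le_of_mul_le_mul_right (h1.trans ?_) hX
      rw [mul_assoc]
      refine mul_le_mul_of_nonneg_left ?_ (Nat.cast_nonneg _)
      have : (1 - (Y.card : ℝ) / n) * (n - X.card)
        = (n : ℝ) - Y.card - X.card + Y.card * X.card / n := by field_simp; ring
      rw [this]
      have : (0 : ℝ) ≤ Y.card * X.card / n := by positivity
      linarith
    exact h2.trans (mul_le_mul_of_nonneg_right ih hr)

/-- Families of permutations containing the triples of `S`. -/
def contSet {Δ n : ℕ} (S : Finset (Fin Δ × Fin n × Fin n)) : Finset (Fin Δ → Perm (Fin n)) :=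
  Finset.univ.filter fun σ => ∀ s ∈ S, σ s.1 s.2.1 = s.2.2

theorem cont_step {Δ n : ℕ} (S : Finset (Fin Δ × Fin n × Fin n)) (s : Fin Δ × Fin n × Fin n)
    (hs : s ∉ S) : (contSet (insert s S)).card * (n - S.card) ≤ (contSet S).card := by
  classical
  obtain ⟨i, a, b⟩ := s
  by_cases hb : ∃ a', (i, a', b) ∈ S
  · obtain ⟨a', ha'⟩ := hb
    have : contSet (insert (i, a, b) S) = ∅ := by
      rw [Finset.eq_empty_iff_forall_notMem]
      intro σ hσ
      simp only [contSet, Finset.mem_filter, Finset.mem_univ, true_and, Finset.mem_insert,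
        forall_eq_or_imp] at hσ
      have h1 := hσ.2 _ ha'
      have : a = a' := (σ i).injective (hσ.1.trans h1.symm)
      subst this
      exact hs ha'
    simp [this]
  · push Not at hb
    let U : Finset (Fin n) := (S.image fun s => s.2.2)ᶜ
    have hU : n - S.card ≤ U.card := by
      rw [Finset.card_compl, Fintype.card_fin]
      have := Finset.card_image_le (s := S) (f := fun s => s.2.2)
      omega
    have h1 : ∀ b' ∈ U, (contSet (insert (i, a, b) S)).card ≤
        ((contSet S).filter fun σ => σ i a = b').card := by
      intro b' hb'
      apply Finset.card_le_card_of_injOn (fun σ => Pi.mulSingle i (swap b b') * σ)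
      · intro σ hσ
        simp only [contSet, Finset.coe_filter, Finset.mem_univ, true_and, Finset.mem_insert,
          forall_eq_or_imp, Set.mem_ofPred_eq, Finset.mem_filter] at hσ ⊢
        refine ⟨?_, ?_⟩
        · rintro ⟨j, x, z⟩ hz
          have h2 := hσ.2 _ hz
          simp only at h2
          simp only [Pi.mul_apply, Perm.mul_apply, h2]
          by_cases hij : j = i
          · subst hij
            rw [Pi.mulSingle_eq_same, swap_apply_of_ne_of_ne]
            · rintro rfl; exact hb _ hz
            · rintro rfl
              simp only [U, Finset.mem_compl, Finset.mem_image, not_exists] at hb'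
              exact hb' _ ⟨hz, rfl⟩
          · rw [Pi.mulSingle_eq_of_ne hij]; rfl
        · simp [hσ.1]
      · intro σ _ σ' _ h
        exact mul_left_cancel h
    have h2 : ∑ b' ∈ U, ((contSet S).filter fun σ => σ i a = b').card ≤ (contSet S).card := by
      rw [Finset.card_eq_sum_card_fiberwise (s := contSet S) (t := Finset.univ)
        (f := fun σ => σ i a) (fun _ _ => Finset.mem_univ _)]
      exact Finset.sum_le_sum_of_subset (Finset.subset_univ _)
    calc _ ≤ (contSet (insert (i, a, b) S)).card * U.card := Nat.mul_le_mul_left _ hU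
      _ = U.card • (contSet (insert (i, a, b) S)).card := by rw [smul_eq_mul, mul_comm]
      _ ≤ _ := Finset.card_nsmul_le_sum _ _ _ h1
      _ ≤ _ := h2

theorem cont_bound {Δ n m : ℕ} (S : Finset (Fin Δ × Fin n × Fin n)) (hS : S.card ≤ m) :
    (contSet S).card * (n - m) ^ S.card ≤ n.factorial ^ Δ := by
  classical
  induction S using Finset.induction_on with
  | empty => simp [contSet, Fintype.card_perm]
  | insert s S hs ih =>
    rw [Finset.card_insert_of_notMem hs] at hS ⊢
    have h1 := cont_step S s hs
    rw [pow_succ]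
    calc _ = ((contSet (insert s S)).card * (n - m)) * (n - m) ^ S.card := by ring
      _ ≤ ((contSet (insert s S)).card * (n - S.card)) * (n - m) ^ S.card := by
        gcongr; omega
      _ ≤ (contSet S).card * (n - m) ^ S.card := by gcongr
      _ ≤ _ := ih (by omega)

/-- The families for which there is a large induced-matching-like structure. -/
def BadIM {Δ n : ℕ} (k : ℕ) (σ : Fin Δ → Perm (Fin n)) : Prop :=
  ∃ X Y : Finset (Fin n), X.card = k ∧ Y.card = k ∧ ∃ c : X → Fin Δ,
    ∀ i (x : X), c x ≠ i → σ i x ∉ Y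

theorem inner_count {Δ n k : ℕ} (hn : 0 < n) (X Y : Finset (Fin n)) (hX : X.card = k)
    (hY : Y.card = k) (c : X → Fin Δ) :
    (((Finset.univ : Finset (Fin Δ → Perm (Fin n))).filter fun σ =>
      ∀ i (x : X), c x ≠ i → σ i x ∉ Y).card : ℝ) ≤
      (n.factorial : ℝ) ^ Δ * (1 - (k : ℝ) / n) ^ ((Δ - 1) * k) := by
  classical
  let Z : Fin Δ → Finset (Fin n) := fun i =>
    (Finset.univ.filter fun x : X => c x ≠ i).map (Function.Embedding.subtype _)
  have h1 : ((Finset.univ : Finset (Fin Δ → Perm (Fin n))).filter fun σ =>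
      ∀ i (x : X), c x ≠ i → σ i x ∉ Y) = Fintype.piFinset fun i => avoidSet (Z i) Y := by
    ext σ
    simp only [Finset.mem_filter, Finset.mem_univ, true_and, Fintype.mem_piFinset, avoidSet]
    refine forall_congr' fun i => ?_
    simp only [Z, Finset.mem_map, Finset.mem_filter, Finset.mem_univ, true_and,
      Function.Embedding.subtype_apply]
    constructor
    · rintro h _ ⟨x, hx, rfl⟩
      exact h x hx
    · intro h x hx
      exact h x ⟨x, hx, rfl⟩
  have h2 : ∑ i, (Z i).card = (Δ - 1) * k := by
    have h3 : ∀ i, (Z i).card + (Finset.univ.filter fun x : X => c x = i).card = k := by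
      intro i
      have := Finset.card_filter_add_card_filter_not (s := (Finset.univ : Finset X))
        (fun x => c x = i)
      rw [Finset.card_univ, Fintype.card_coe, hX] at this
      simp only [Z, Finset.card_map]
      rw [add_comm]
      exact this
    have h4 : ∑ i, (Finset.univ.filter fun x : X => c x = i).card = k := by
      rw [← Finset.card_eq_sum_card_fiberwise (fun _ _ => Finset.mem_univ _), Finset.card_univ,
        Fintype.card_coe, hX]
    have h5 := Finset.sum_congr rfl (fun i (_ : i ∈ (Finset.univ : Finset (Fin Δ))) => h3 i)
    rw [Finset.sum_add_distrib, h4, Finset.sum_const, Finset.card_univ, Fintype.card_fin,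
      smul_eq_mul] at h5
    rw [Nat.sub_mul]
    omega
  rw [h1, Fintype.card_piFinset]
  push_cast
  calc _ ≤ ∏ i : Fin Δ, ((n.factorial : ℝ) * (1 - (k : ℝ) / n) ^ (Z i).card) := by
        apply Finset.prod_le_prod
        · intros; positivity
        · intro i _
          have := avoid_bound hn (Z i) Y
          rwa [hY] at this
    _ = _ := by
        rw [Finset.prod_mul_distrib, Finset.prod_pow_eq_pow_sum, h2]
        simp

open Classical in
theorem badIM_count {Δ n k : ℕ} (hn : 0 < n) :
    (((Finset.univ : Finset (Fin Δ → Perm (Fin n))).filter fun σ => BadIM k σ).card : ℝ) ≤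
      (n.choose k : ℝ) ^ 2 * Δ ^ k *
        ((n.factorial : ℝ) ^ Δ * (1 - (k : ℝ) / n) ^ ((Δ - 1) * k)) := by
  let P : Finset (Finset (Fin n)) := Finset.powersetCard k Finset.univ
  let F : Finset (Fin n) → Finset (Fin n) → Finset (Fin Δ → Perm (Fin n)) := fun X Y =>
    Finset.univ.biUnion fun c : X → Fin Δ => Finset.univ.filter fun σ =>
      ∀ i (x : X), c x ≠ i → σ i x ∉ Y
  set D : ℝ := (n.factorial : ℝ) ^ Δ * (1 - (k : ℝ) / n) ^ ((Δ - 1) * k) with hD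
  have hF : ∀ X ∈ P, ∀ Y ∈ P, ((F X Y).card : ℝ) ≤ Δ ^ k * D := by
    intro X hX Y hY
    simp only [P, Finset.mem_powersetCard, Finset.subset_univ, true_and] at hX hY
    have h1 : ((F X Y).card : ℝ) ≤ ∑ c : X → Fin Δ, (((Finset.univ :
        Finset (Fin Δ → Perm (Fin n))).filter fun σ =>
        ∀ i (x : X), c x ≠ i → σ i x ∉ Y).card : ℝ) := by
      exact_mod_cast Finset.card_biUnion_le
    refine h1.trans ?_
    refine (Finset.sum_le_card_nsmul _ _ D fun c _ => inner_count hn X Y hX hY c).trans ?_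
    rw [Finset.card_univ, Fintype.card_fun, Fintype.card_fin, Fintype.card_coe, hX, nsmul_eq_mul]
    push_cast
    exact le_rfl
  have hsub : ((Finset.univ : Finset (Fin Δ → Perm (Fin n))).filter fun σ => BadIM k σ) ⊆
      P.biUnion fun X => P.biUnion fun Y => F X Y := by
    intro σ hσ
    simp only [Finset.mem_filter, Finset.mem_univ, true_and] at hσ
    obtain ⟨X, Y, hX, hY, c, hc⟩ := hσ
    simp only [Finset.mem_biUnion, P, Finset.mem_powersetCard, Finset.subset_univ, true_and, F,
      Finset.mem_univ, Finset.mem_filter]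
    exact ⟨X, hX, Y, hY, c, hc⟩
  have hP : P.card = n.choose k := by simp [P]
  have h3 : ((P.biUnion fun X => P.biUnion fun Y => F X Y).card : ℝ) ≤
      ∑ X ∈ P, ∑ Y ∈ P, ((F X Y).card : ℝ) := by
    have : (P.biUnion fun X => P.biUnion fun Y => F X Y).card ≤ ∑ X ∈ P, ∑ Y ∈ P, (F X Y).card :=
      Finset.card_biUnion_le.trans (Finset.sum_le_sum fun X _ => Finset.card_biUnion_le)
    exact_mod_cast this
  have h4 : ∑ X ∈ P, ∑ Y ∈ P, ((F X Y).card : ℝ) ≤ P.card • (P.card • (Δ ^ k * D)) :=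
    Finset.sum_le_card_nsmul _ _ _ fun X hX =>
      Finset.sum_le_card_nsmul _ _ _ fun Y hY => hF X hX Y hY
  have h5 : (((Finset.univ : Finset (Fin Δ → Perm (Fin n))).filter fun σ => BadIM k σ).card : ℝ)
      ≤ ((P.biUnion fun X => P.biUnion fun Y => F X Y).card : ℝ) := by
    exact_mod_cast Finset.card_le_card hsub
  refine (h5.trans (h3.trans h4)).trans (le_of_eq ?_)
  rw [hP, nsmul_eq_mul, nsmul_eq_mul]
  ring

end RB
namespace RB
open Equiv

theorem y_bounds (Δ : ℕ) (hΔ : 21 ≤ Δ) :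
    0 < (3 * Real.log Δ - 1 / 2) / Δ ∧ (3 * Real.log Δ - 1 / 2) / Δ ≤ 1 / 2 ∧
    (Real.exp 1 / ((3 * Real.log Δ - 1 / 2) / Δ)) ^ 2 * Δ *
      (1 - (3 * Real.log Δ - 1 / 2) / Δ) ^ (Δ - 1) < 1 / 2 := by
  have hΔ' : (21 : ℝ) ≤ Δ := by exact_mod_cast hΔ
  have hΔ0 : (0 : ℝ) < Δ := by linarith
  have he1 := Real.exp_one_lt_d9
  have he2 := Real.exp_one_gt_d9
  have he3 : Real.exp 3 = Real.exp 1 ^ 3 := by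
    rw [← Real.exp_nat_mul]; norm_num
  have he3u : Real.exp 3 < 21 := by
    rw [he3]
    calc Real.exp 1 ^ 3 < 2.7182818286 ^ 3 := by gcongr
      _ < 21 := by norm_num
  have he3l : 20 < Real.exp 3 := by
    rw [he3]
    calc (20 : ℝ) < 2.7182818283 ^ 3 := by norm_num
      _ < Real.exp 1 ^ 3 := by gcongr
  have hL3 : 3 ≤ Real.log Δ := by
    rw [Real.le_log_iff_exp_le hΔ0]; linarith
  have hl21 : Real.log 21 ≤ 3.1 := by
    rw [Real.log_le_iff_le_exp (by norm_num)]
    have h1 : (0.1 : ℝ) + 1 ≤ Real.exp 0.1 := Real.add_one_le_exp _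
    have h2 : Real.exp 3.1 = Real.exp 3 * Real.exp 0.1 := by
      rw [← Real.exp_add]; norm_num
    rw [h2]
    nlinarith
  have hLu : Real.log Δ ≤ 3.1 + (Δ / 21 - 1) := by
    have h1 : Real.log (Δ / 21) ≤ Δ / 21 - 1 := Real.log_le_sub_one_of_pos (by positivity)
    rw [Real.log_div hΔ0.ne' (by norm_num)] at h1
    linarith
  set L := Real.log Δ with hL
  have hy0 : 0 < (3 * L - 1 / 2) / Δ := div_pos (by linarith) hΔ0
  have hy1 : (3 * L - 1 / 2) / Δ ≤ 1 / 2 := by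
    rw [div_le_iff₀ hΔ0]
    linarith
  refine ⟨hy0, hy1, ?_⟩
  set y := (3 * L - 1 / 2) / Δ with hy
  have hyΔ : y * Δ = 3 * L - 1 / 2 := by
    rw [hy]; field_simp
  have h1 : (1 - y) ^ (Δ - 1) ≤ Real.exp (1 / 2 + y) / Δ ^ 3 := by
    have h2 : 1 - y ≤ Real.exp (-y) := by
      have := Real.add_one_le_exp (-y); linarith
    calc (1 - y) ^ (Δ - 1) ≤ Real.exp (-y) ^ (Δ - 1) := by
          apply pow_le_pow_left₀ _ h2; linarith
      _ = Real.exp (1 / 2 + y - 3 * L) := by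
          rw [← Real.exp_nat_mul, Nat.cast_sub (by omega)]
          congr 1
          push_cast
          linarith
      _ = Real.exp (1 / 2 + y) / Δ ^ 3 := by
          rw [Real.exp_sub]
          congr 1
          have : (3 : ℝ) * L = ((3 : ℕ) : ℝ) * L := by norm_num
          rw [this, Real.exp_nat_mul, hL, Real.exp_log hΔ0]
  have h3 : (Real.exp 1 / y) ^ 2 * Δ * (Real.exp (1 / 2 + y) / Δ ^ 3)
      = Real.exp (5 / 2 + y) / (3 * L - 1 / 2) ^ 2 := by
    rw [← hyΔ]
    have : Real.exp (5 / 2 + y) = Real.exp 1 ^ 2 * Real.exp (1 / 2 + y) := by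
      rw [← Real.exp_nat_mul, ← Real.exp_add]
      congr 1
      push_cast
      ring
    rw [this]
    field_simp
  calc _ ≤ (Real.exp 1 / y) ^ 2 * Δ * (Real.exp (1 / 2 + y) / Δ ^ 3) := by gcongr
    _ = Real.exp (5 / 2 + y) / (3 * L - 1 / 2) ^ 2 := h3
    _ < 1 / 2 := by
      rw [div_lt_iff₀ (by nlinarith)]
      have : Real.exp (5 / 2 + y) ≤ Real.exp 3 := by
        apply Real.exp_le_exp.2; linarith
      nlinarith

theorem choose_bound (n k : ℕ) (hk : 0 < k) (y : ℝ) (hy : 0 < y) (h : y * n ≤ k) :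
    (n.choose k : ℝ) ≤ (Real.exp 1 / y) ^ k := by
  have hk' : (0 : ℝ) < k := by exact_mod_cast hk
  have h1 : (n.choose k : ℝ) ≤ (n : ℝ) ^ k / k.factorial := Nat.choose_le_pow_div k n
  have h2 : (k : ℝ) ^ k / k.factorial ≤ Real.exp k := Real.pow_div_factorial_le_exp _ hk'.le k
  have h3 : (n : ℝ) ≤ k / y := by
    rw [le_div_iff₀ hy]; linarith
  calc (n.choose k : ℝ) ≤ (n : ℝ) ^ k / k.factorial := h1
    _ ≤ (k / y) ^ k / k.factorial := by gcongr
    _ = ((k : ℝ) ^ k / k.factorial) / y ^ k := by rw [div_pow]; ring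
    _ ≤ Real.exp k / y ^ k := by gcongr
    _ = (Real.exp 1 / y) ^ k := by
      rw [div_pow, ← Real.exp_nat_mul, mul_one]

open Classical in
theorem badIM_lt (Δ n k : ℕ) (hΔ : 21 ≤ Δ) (hn : 0 < n)
    (hk : k = ⌈(3 * Real.log Δ - 1 / 2) / Δ * n⌉₊) :
    (((Finset.univ : Finset (Fin Δ → Perm (Fin n))).filter fun σ => BadIM k σ).card : ℝ) <
      (n.factorial : ℝ) ^ Δ / 2 := by
  obtain ⟨hy0, hy1, hq⟩ := y_bounds Δ hΔ
  set y := (3 * Real.log Δ - 1 / 2) / Δ with hy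
  have hn' : (0 : ℝ) < n := by exact_mod_cast hn
  have hyk : y * n ≤ k := hk ▸ Nat.le_ceil _
  have hk0 : 0 < k := by
    rw [hk]; exact Nat.ceil_pos.2 (by positivity)
  have hkn : k ≤ n := by
    rw [hk]; apply Nat.ceil_le.2; nlinarith
  have hkn' : (k : ℝ) ≤ n := by exact_mod_cast hkn
  have h1 : 0 ≤ 1 - (k : ℝ) / n := by
    rw [sub_nonneg, div_le_one hn']; exact hkn'
  have h2 : 1 - (k : ℝ) / n ≤ 1 - y := by
    have : y ≤ (k : ℝ) / n := by rw [le_div_iff₀ hn']; exact hyk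
    linarith
  refine (badIM_count hn).trans_lt ?_
  have hc := choose_bound n k hk0 y hy0 hyk
  set q := (Real.exp 1 / y) ^ 2 * Δ * (1 - y) ^ (Δ - 1) with hqdef
  have hq0 : 0 ≤ q := by
    have : 0 ≤ 1 - y := by linarith
    positivity
  have hF : (0 : ℝ) < (n.factorial : ℝ) ^ Δ := by
    have := n.factorial_pos
    positivity
  calc _ ≤ ((Real.exp 1 / y) ^ k) ^ 2 * Δ ^ k *
        ((n.factorial : ℝ) ^ Δ * (1 - y) ^ ((Δ - 1) * k)) := by gcongr
    _ = (n.factorial : ℝ) ^ Δ * q ^ k := by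
        rw [hqdef, mul_pow, mul_pow, pow_mul (1 - y), ← pow_mul, ← pow_mul, mul_comm k 2]; ring
    _ ≤ (n.factorial : ℝ) ^ Δ * q := by
        gcongr
        exact pow_le_of_le_one hq0 (by linarith) (by omega)
    _ < (n.factorial : ℝ) ^ Δ / 2 := by
        rw [div_eq_mul_one_div]
        exact mul_lt_mul_of_pos_left hq hF

/-- The triple of a colored bipartite edge. -/
def tri {Δ n : ℕ} (i : Fin Δ) : Fin n ⊕ Fin n → Fin n ⊕ Fin n → Fin Δ × Fin n × Fin n
  | .inl a, .inr b => (i, a, b)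
  | .inr b, .inl a => (i, a, b)
  | .inl a, .inl _ => (i, a, a)
  | .inr b, .inr _ => (i, b, b)

def TT {Δ n m : ℕ} (v : Fin m → Fin n ⊕ Fin n) (c : Fin m → Fin Δ) :
    Finset (Fin Δ × Fin n × Fin n) :=
  Finset.univ.image fun t : Fin m => tri (c t) (v t) (v ⟨(t + 1) % m, Nat.mod_lt _ t.pos⟩)

def IsBad {Δ n m : ℕ} (σ : Fin Δ → Perm (Fin n))
    (p : (Fin m → Fin n ⊕ Fin n) × (Fin m → Fin Δ)) : Prop :=
  (TT p.1 p.2).card = m ∧ ∀ s ∈ TT p.1 p.2, σ s.1 s.2.1 = s.2.2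

open Classical in
noncomputable def BB {Δ n : ℕ} (g : ℕ) (σ : Fin Δ → Perm (Fin n)) : Finset (Fin n) :=
  (Finset.range g).biUnion fun m =>
    ((Finset.univ : Finset ((Fin m → Fin n ⊕ Fin n) × (Fin m → Fin Δ))).filter
      fun p => IsBad σ p).biUnion fun p => (TT p.1 p.2).image fun s => s.2.1

theorem mem_BB {Δ n g m : ℕ} (σ : Fin Δ → Perm (Fin n)) (hm : m < g)
    (p : (Fin m → Fin n ⊕ Fin n) × (Fin m → Fin Δ)) (hp : IsBad σ p)
    (s : Fin Δ × Fin n × Fin n) (hs : s ∈ TT p.1 p.2) : s.2.1 ∈ BB g σ := by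
  classical
  simp only [BB, Finset.mem_biUnion, Finset.mem_range, Finset.mem_filter, Finset.mem_univ,
    true_and, Finset.mem_image]
  exact ⟨m, hm, p, hp, s, hs, rfl⟩

theorem BB_simp {Δ n g : ℕ} (hg : 3 ≤ g) (σ : Fin Δ → Perm (Fin n)) :
    Simp σ (BB g σ : Set (Fin n)) := by
  intro a ha i j hij
  by_contra hne
  apply ha
  have hT : TT (n := n) ![Sum.inl a, Sum.inr (σ i a)] ![i, j] = {(i, a, σ i a), (j, a, σ i a)} := by
    ext s
    simp only [TT, Finset.mem_image, Finset.mem_univ, true_and, Finset.mem_insert,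
      Finset.mem_singleton, Fin.exists_fin_two]
    constructor
    · rintro (h | h)
      · left; rw [← h]; rfl
      · right; rw [← h]; rfl
    · rintro (h | h)
      · left; rw [h]; rfl
      · right; rw [h]; rfl
  have := mem_BB (g := g) (m := 2) σ (by omega) (![Sum.inl a, Sum.inr (σ i a)], ![i, j]) ?_
    (i, a, σ i a) ?_
  · exact this
  · refine ⟨?_, ?_⟩
    · simp only [hT]
      rw [Finset.card_pair]
      simp [hne]
    · simp only [hT]
      simp [hij]
  · simp [hT]

theorem BB_girth {Δ n g : ℕ} (σ : Fin Δ → Perm (Fin n)) :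
    (g : ℕ∞) ≤ (bG σ (BB g σ : Set (Fin n))).egirth := by
  classical
  rw [le_egirth]
  intro u w hw
  by_contra hlt
  have hm : w.length < g := by
    rw [not_le] at hlt; exact_mod_cast hlt
  have h3 := hw.three_le_length
  set m := w.length with hmdef
  have hnext : ∀ t : Fin m, w.getVert ((t + 1) % m) = w.getVert (t + 1) := by
    intro t
    rcases Nat.lt_or_ge (t + 1) m with h | h
    · rw [Nat.mod_eq_of_lt h]
    · have : (t : ℕ) + 1 = m := by have := t.2; omega
      rw [this, Nat.mod_self, Walk.getVert_zero, hmdef, Walk.getVert_length]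
  have hadj : ∀ t : Fin m, ∃ (i : Fin Δ) (a : Fin n), a ∉ BB g σ ∧
      tri i (w.getVert t) (w.getVert (t + 1)) = (i, a, σ i a) ∧
      s(w.getVert t, w.getVert (t + 1)) = s(Sum.inl a, Sum.inr (σ i a)) := by
    intro t
    obtain ⟨a, i, ha, ⟨h1, h2⟩ | ⟨h1, h2⟩⟩ := w.adj_getVert_succ (i := t) t.2
    · refine ⟨i, a, ha, ?_, ?_⟩
      · rw [h1, h2]; rfl
      · rw [h1, h2]
    · refine ⟨i, a, ha, ?_, ?_⟩
      · rw [h1, h2]; rfl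
      · rw [h1, h2]; exact Sym2.eq_swap
  choose c a ha htri hedge using hadj
  let v : Fin m → Fin n ⊕ Fin n := fun t => w.getVert t
  have hmem : ∀ s, s ∈ TT v c ↔ ∃ t, s = (c t, a t, σ (c t) (a t)) := by
    intro s
    simp only [TT, Finset.mem_image, Finset.mem_univ, true_and]
    refine exists_congr fun t => ?_
    simp only [v, hnext, htri]
    exact eq_comm
  have hbad : IsBad σ (v, c) := by
    refine ⟨le_antisymm ?_ ?_, ?_⟩
    · exact Finset.card_image_le.trans (by simp)
    · have h1 : w.edges.toFinset ⊆ (TT v c).image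
          fun s => s((Sum.inl s.2.1 : Fin n ⊕ Fin n), Sum.inr s.2.2) := by
        intro e he
        rw [List.mem_toFinset] at he
        induction e using Sym2.ind with
        | _ p q =>
          obtain ⟨t, ht, hpq⟩ := (w.mk_mem_edges_iff_exists).1 he
          rw [Finset.mem_image]
          refine ⟨_, (hmem _).2 ⟨⟨t, ht⟩, rfl⟩, ?_⟩
          rw [← hpq]
          exact (hedge ⟨t, ht⟩).symm
      have h2 := (Finset.card_le_card h1).trans Finset.card_image_le
      rw [List.toFinset_card_of_nodup hw.edges_nodup, Walk.length_edges] at h2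
      exact h2
    · intro s hs
      obtain ⟨t, rfl⟩ := (hmem s).1 hs
      rfl
  have h0 : 0 < m := by omega
  exact ha ⟨0, h0⟩ (mem_BB σ hm (v, c) hbad _ ((hmem _).2 ⟨⟨0, h0⟩, rfl⟩))

open Classical in
theorem isBad_count {Δ n m : ℕ} (hm : m < n)
    (p : (Fin m → Fin n ⊕ Fin n) × (Fin m → Fin Δ)) :
    (((Finset.univ : Finset (Fin Δ → Perm (Fin n))).filter fun σ => IsBad σ p).card : ℝ) ≤
      (n.factorial : ℝ) ^ Δ / ((n : ℝ) - m) ^ m := by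
  have hpos : (0 : ℝ) < (n : ℝ) - m := by
    rw [sub_pos]; exact_mod_cast hm
  by_cases hc : (TT p.1 p.2).card = m
  · have h1 := cont_bound (m := m) (TT p.1 p.2) hc.le
    rw [hc] at h1
    rw [le_div_iff₀ (by positivity)]
    have h2 : ((Finset.univ : Finset (Fin Δ → Perm (Fin n))).filter fun σ => IsBad σ p) ⊆
        contSet (TT p.1 p.2) := by
      intro σ hσ
      simp only [Finset.mem_filter, Finset.mem_univ, true_and, contSet] at hσ ⊢
      exact hσ.2
    have h3 := (Nat.mul_le_mul_right ((n - m) ^ m) (Finset.card_le_card h2)).trans h1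
    have h4 : ((n - m : ℕ) : ℝ) = (n : ℝ) - m := Nat.cast_sub hm.le
    rw [← h4]
    exact_mod_cast h3
  · have : ((Finset.univ : Finset (Fin Δ → Perm (Fin n))).filter fun σ => IsBad σ p) = ∅ := by
      rw [Finset.filter_eq_empty_iff]
      intro σ _ h
      exact hc h.1
    rw [this]
    simp only [Finset.card_empty, Nat.cast_zero]
    positivity

theorem BB_sum {Δ n g : ℕ} (hn : 2 * g ≤ n) :
    ∑ σ : Fin Δ → Perm (Fin n), ((BB g σ).card : ℝ) ≤
      (n.factorial : ℝ) ^ Δ * ∑ m ∈ Finset.range g, (m : ℝ) * (4 * Δ) ^ m := by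
  classical
  have h1 : ∀ σ : Fin Δ → Perm (Fin n), ((BB g σ).card : ℝ) ≤ ∑ m ∈ Finset.range g,
      ∑ p : (Fin m → Fin n ⊕ Fin n) × (Fin m → Fin Δ), if IsBad σ p then (m : ℝ) else 0 := by
    intro σ
    have h2 : (BB g σ).card ≤ ∑ m ∈ Finset.range g,
      ∑ p : (Fin m → Fin n ⊕ Fin n) × (Fin m → Fin Δ), if IsBad σ p then m else 0 := by
      refine Finset.card_biUnion_le.trans (Finset.sum_le_sum fun m _ => ?_)
      refine Finset.card_biUnion_le.trans ?_
      rw [Finset.sum_filter]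
      refine Finset.sum_le_sum fun p _ => ?_
      split_ifs with h
      · exact Finset.card_image_le.trans h.1.le
      · exact le_rfl
    exact_mod_cast h2
  refine (Finset.sum_le_sum fun σ _ => h1 σ).trans ?_
  rw [Finset.sum_comm, Finset.mul_sum]
  refine Finset.sum_le_sum fun m hm => ?_
  rw [Finset.mem_range] at hm
  rw [Finset.sum_comm]
  have hmn : m < n := by omega
  have h3 : ∀ p : (Fin m → Fin n ⊕ Fin n) × (Fin m → Fin Δ),
      ∑ σ : Fin Δ → Perm (Fin n), (if IsBad σ p then (m : ℝ) else 0) ≤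
        m * ((n.factorial : ℝ) ^ Δ / ((n : ℝ) - m) ^ m) := by
    intro p
    rw [← Finset.sum_filter, Finset.sum_const, nsmul_eq_mul, mul_comm]
    exact mul_le_mul_of_nonneg_left (isBad_count hmn p) (Nat.cast_nonneg _)
  refine (Finset.sum_le_card_nsmul _ _ _ fun p _ => h3 p).trans ?_
  rw [nsmul_eq_mul, Finset.card_univ, Fintype.card_prod, Fintype.card_fun, Fintype.card_fun,
    Fintype.card_sum, Fintype.card_fin, Fintype.card_fin, Fintype.card_fin]
  push_cast
  have hpos : (0 : ℝ) < (n : ℝ) - m := by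
    rw [sub_pos]; exact_mod_cast hmn
  have h4 : ((n : ℝ) + n) * Δ / (n - m) ≤ 4 * Δ := by
    rw [div_le_iff₀ hpos]
    have : (2 : ℝ) * m ≤ n := by exact_mod_cast (by omega : 2 * m ≤ n)
    have hΔ : (0 : ℝ) ≤ Δ := Nat.cast_nonneg _
    nlinarith
  calc _ = (n.factorial : ℝ) ^ Δ * (m * (((n : ℝ) + n) * Δ / (n - m)) ^ m) := by
        rw [div_pow, mul_pow]; ring
    _ ≤ _ := by gcongr

theorem noIM_of_not_bad {Δ n k : ℕ} (σ : Fin Δ → Perm (Fin n)) (B : Set (Fin n)) (hS : Simp σ B)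
    (t : ℝ) (hk : k = ⌈t⌉₊) (h : ¬ BadIM k σ) : NoIM σ B t := by
  classical
  intro X f hXB hX
  by_contra hlt
  rw [not_le] at hlt
  have hkX : k ≤ X.card := by
    rw [hk]; exact Nat.ceil_le.2 hlt.le
  obtain ⟨X', hX', hcard⟩ := Finset.exists_subset_card_eq hkX
  apply h
  refine ⟨X', X'.image fun x => σ (f x) x, hcard, ?_, fun x => f x, ?_⟩
  · rw [Finset.card_image_of_injOn, hcard]
    intro x hx x' hx' heq
    exact hX x (hX' hx) x' (hX' hx') (f x) heq
  · rintro i ⟨x, hx⟩ hne hmem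
    rw [Finset.mem_image] at hmem
    obtain ⟨x', hx', heq⟩ := hmem
    have := hX x (hX' hx) x' (hX' hx') i heq.symm
    subst this
    exact hne (hS x (hXB x (hX' hx)) _ _ heq)

theorem base_exists (Δ g : ℕ) (hΔ : 21 ≤ Δ) (hg : 3 ≤ g) :
    ∃ (n : ℕ) (σ : Fin Δ → Perm (Fin n)) (B : Set (Fin n)),
      Good g ((3 * Real.log Δ - 1 / 2) / Δ) σ B := by
  classical
  set C : ℝ := ∑ m ∈ Finset.range g, (m : ℝ) * (4 * Δ) ^ m with hC
  obtain ⟨N, hN⟩ := exists_nat_gt (4 * Δ * C)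
  let n := N + 2 * g
  have hn0 : 0 < n := by omega
  have hnC : 4 * Δ * C < n := by
    refine hN.trans_le ?_
    simp only [n]; push_cast
    have : (0 : ℝ) ≤ g := Nat.cast_nonneg _
    linarith
  set y := (3 * Real.log Δ - 1 / 2) / Δ with hy
  set k := ⌈y * n⌉₊ with hk
  have hbad := badIM_lt Δ n k hΔ hn0 hk
  have hsum := BB_sum (Δ := Δ) (n := n) (g := g) (by omega)
  rw [← hC] at hsum
  have hF : (0 : ℝ) < (n.factorial : ℝ) ^ Δ := by
    have := n.factorial_pos
    positivity
  have hn' : (0 : ℝ) < n := by exact_mod_cast hn0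
  let W := (Finset.univ : Finset (Fin Δ → Perm (Fin n))).filter fun σ =>
    (n : ℝ) ≤ (BB g σ).card * (2 * Δ)
  have hW : (W.card : ℝ) < (n.factorial : ℝ) ^ Δ / 2 := by
    have h1 : (W.card : ℝ) * n ≤ ∑ σ : Fin Δ → Perm (Fin n), ((BB g σ).card : ℝ) * (2 * Δ) := by
      rw [← nsmul_eq_mul]
      refine (Finset.card_nsmul_le_sum W (fun σ => ((BB g σ).card : ℝ) * (2 * Δ)) n ?_).trans ?_
      · intro σ hσ
        exact (Finset.mem_filter.1 hσ).2
      · exact Finset.sum_le_sum_of_subset_of_nonneg (Finset.subset_univ _)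
          (fun _ _ _ => by positivity)
    rw [← Finset.sum_mul] at h1
    have h2 := h1.trans (mul_le_mul_of_nonneg_right hsum (by positivity : (0 : ℝ) ≤ 2 * Δ))
    refine lt_of_mul_lt_mul_right (h2.trans_lt ?_) hn'.le
    have := mul_lt_mul_of_pos_left hnC hF
    linarith
  obtain ⟨σ, h1, h2⟩ : ∃ σ : Fin Δ → Perm (Fin n), ¬ BadIM k σ ∧ σ ∉ W := by
    by_contra hno
    push Not at hno
    have h3 : (Finset.univ : Finset (Fin Δ → Perm (Fin n))) ⊆
        (Finset.univ.filter fun σ => BadIM k σ) ∪ W := by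
      intro σ _
      rw [Finset.mem_union]
      by_cases hb : BadIM k σ
      · left; simp [hb]
      · right; exact hno σ hb
    have h4 := (Finset.card_le_card h3).trans (Finset.card_union_le _ _)
    have h5 : (Finset.univ : Finset (Fin Δ → Perm (Fin n))).card = n.factorial ^ Δ := by
      simp [Fintype.card_perm]
    rw [h5] at h4
    have h6 : (n.factorial : ℝ) ^ Δ ≤
        (((Finset.univ : Finset (Fin Δ → Perm (Fin n))).filter fun σ => BadIM k σ).card : ℝ) +
          W.card := by exact_mod_cast h4
    linarith
  refine ⟨n, σ, BB g σ, BB_simp hg σ, BB_girth σ, ?_, ?_⟩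
  · rw [Fintype.card_fin]
    exact noIM_of_not_bad σ _ (BB_simp hg σ) _ hk h1
  · rw [Fintype.card_fin, Set.ncard_coe_finset]
    simpa [W] using h2

end RB

/-- Proposition 7: for every `Δ ≥ 21` and `g ≥ 3`, there is a `Δ`-regular bipartite
graph with girth at least `g` and parts of equal size `n` in which every induced
matching has fewer than `⌈3 n ln Δ / Δ⌉` edges; consequently
`χ'_s(G) > Δ² / (3 ln Δ)`. -/
theorem exists_regular_bipartite_no_large_induced_matching (Δ g : ℕ)
    (hΔ : 21 ≤ Δ) (hg : 3 ≤ g) :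
    ∃ (n : ℕ) (G : SimpleGraph (Fin n ⊕ Fin n)),
      (∀ a b : Fin n, ¬ G.Adj (Sum.inl a) (Sum.inl b)) ∧
      (∀ a b : Fin n, ¬ G.Adj (Sum.inr a) (Sum.inr b)) ∧
      (∀ v, (G.neighborSet v).ncard = Δ) ∧
      (g : ℕ∞) ≤ G.egirth ∧
      (∀ M : Set (Sym2 (Fin n ⊕ Fin n)), IsInducedMatching G M →
        M.ncard < ⌈(3 : ℝ) * n * Real.log Δ / Δ⌉₊) ∧
      ((Δ : ℝ) ^ 2 / (3 * Real.log Δ) < (sChromIndex G : ℝ)) := by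
  exact RB.reduction Δ g hΔ (RB.base_exists Δ g hΔ hg)
end

section
/- Let H be a 3-regular, triangle-free finite simple graph containing no copy of K_{2,3}, and suppose H contains a 4-cycle with vertices w, x, y, z (in this cyclic order). If H − {w,x,y,z} admits an injective edge-coloring with 7 colors, then H admits an injective edge-coloring with 7 colors. -/
open SimpleGraph

/-- The coefficient at exponent `t` of the product of `X i - X j` over a list of pairs. -/
def listCoeff : List (Fin 8 × Fin 8) → (Fin 8 → ℕ) → ℤ
  | [], t => if ∀ i, t i = 0 then 1 else 0
  | e :: L, t =>
    (if t e.1 ≠ 0 then listCoeff L (fun k => if k = e.1 then t k - 1 else t k) else 0) -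
    (if t e.2 ≠ 0 then listCoeff L (fun k => if k = e.2 then t k - 1 else t k) else 0)

/-- The graph polynomial of a list of pairs. -/
noncomputable def listPoly (L : List (Fin 8 × Fin 8)) : MvPolynomial (Fin 8) ℤ :=
  (L.map (fun e => (MvPolynomial.X e.1 - MvPolynomial.X e.2 : MvPolynomial (Fin 8) ℤ))).prod

lemma coeff_listPoly (L : List (Fin 8 × Fin 8)) :
    ∀ t : Fin 8 →₀ ℕ, (listPoly L).coeff t = listCoeff L t := by
  induction L with
  | nil =>
    intro t
    simp only [listPoly, listCoeff, List.map_nil, List.prod_nil, MvPolynomial.coeff_one]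
    congr 1
    rw [Finsupp.ext_iff]
    simp [eq_comm]
  | cons e L ih =>
    intro t
    have h : listPoly (e :: L) = MvPolynomial.X e.1 * listPoly L
        - MvPolynomial.X e.2 * listPoly L := by
      simp [listPoly, sub_mul]
    have aux : ∀ s : Fin 8, (⇑(t - Finsupp.single s 1 : Fin 8 →₀ ℕ) : Fin 8 → ℕ)
        = fun k => if k = s then t k - 1 else t k := by
      intro s
      funext k
      by_cases hk : k = s
      · subst hk; simp
      · simp [hk, Finsupp.single_apply, Ne.symm hk]
    rw [h, MvPolynomial.coeff_sub, MvPolynomial.coeff_X_mul', MvPolynomial.coeff_X_mul',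
      ih, ih, aux, aux]
    simp only [Finsupp.mem_support_iff, listCoeff]

lemma totalDegree_listPoly (L : List (Fin 8 × Fin 8)) :
    (listPoly L).totalDegree ≤ L.length := by
  induction L with
  | nil => simp [listPoly]
  | cons e L ih =>
    have h : listPoly (e :: L) = (MvPolynomial.X e.1 - MvPolynomial.X e.2) * listPoly L := by
      simp [listPoly]
    rw [h]
    refine (MvPolynomial.totalDegree_mul _ _).trans ?_
    have h2 : (MvPolynomial.X e.1 - MvPolynomial.X e.2 : MvPolynomial (Fin 8) ℤ).totalDegree ≤ 1 := by
      refine (MvPolynomial.totalDegree_sub _ _).trans ?_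
      simp
    simp only [List.length_cons]
    omega

lemma list_color (L : List (Fin 8 × Fin 8)) (t : Fin 8 → ℕ) (hc : listCoeff L t ≠ 0)
    (hd : ∑ i, t i = L.length) (S : Fin 8 → Finset (Fin 7)) (hS : ∀ i, t i < (S i).card) :
    ∃ c : Fin 8 → Fin 7, (∀ i, c i ∈ S i) ∧ ∀ e ∈ L, c e.1 ≠ c e.2 := by
  let t' : Fin 8 →₀ ℕ := Finsupp.equivFunOnFinite.symm t
  have ht' : (⇑t' : Fin 8 → ℕ) = t := rfl
  have hc' : (listPoly L).coeff t' ≠ 0 := by rw [coeff_listPoly, ht']; exact hc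
  have hdeg : t'.degree = L.length := by
    rw [Finsupp.degree_eq_sum, ht', hd]
  let φ : Fin 7 ↪ ℤ := ⟨fun i => (i.val : ℤ), fun a b h => Fin.ext (by simpa using h)⟩
  have htot : (listPoly L).totalDegree = t'.degree := by
    apply le_antisymm
    · rw [hdeg]; exact totalDegree_listPoly L
    · have := MvPolynomial.le_totalDegree (MvPolynomial.mem_support_iff.2 hc')
      simpa [Finsupp.degree_apply, Finsupp.sum] using this
  obtain ⟨s, hs, hne⟩ := MvPolynomial.combinatorial_nullstellensatz_exists_eval_nonzero
    (listPoly L) t' hc' htot (fun i => (S i).map φ) (by intro i; simpa [ht'] using hS i)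
  have hs' : ∀ i, ∃ a ∈ S i, φ a = s i := fun i => by simpa using hs i
  choose c hcS hcs using hs'
  refine ⟨c, hcS, fun e he hce => hne ?_⟩
  rw [listPoly, map_list_prod, List.prod_eq_zero_iff]
  simp only [List.map_map, List.mem_map]
  exact ⟨e, he, by simp [← hcs, hce]⟩

/-- Conflicts between the eight uncoloured edges: `0,1,2,3` are the cycle edges,
`4,5,6,7` the pendant ones. -/
def baseConf : List (Fin 8 × Fin 8) :=
  [(0,2),(0,6),(0,7),(1,3),(1,7),(1,4),(2,4),(2,5),(3,5),(3,6),(4,5),(5,6),(6,7),(7,4)]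

lemma list_color_C4 (p q : Prop) (S : Fin 8 → Finset (Fin 7)) (hS : ∀ i, 3 ≤ (S i).card)
    (hp : p → 4 ≤ (S 4).card ∧ 4 ≤ (S 6).card) (hq : q → 4 ≤ (S 5).card ∧ 4 ≤ (S 7).card) :
    ∃ c : Fin 8 → Fin 7, (∀ i, c i ∈ S i) ∧ (∀ e ∈ baseConf, c e.1 ≠ c e.2) ∧
      (p → c 4 ≠ c 6) ∧ (q → c 5 ≠ c 7) := by
  by_cases h1 : p <;> by_cases h2 : q
  · obtain ⟨c, hc, h⟩ := list_color ((4,6) :: (5,7) :: baseConf) ![2, 2, 2, 2, 3, 2, 2, 1]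
      (by decide +kernel) (by decide +kernel) S (by
        have a := hp h1
        have b := hq h2
        intro i; have := hS i; fin_cases i <;> simp [-Finset.card_pos] at * <;> omega)
    exact ⟨c, hc, fun e he => h e (by simp [he]), fun _ => h (4,6) (by simp), fun _ => h (5,7) (by simp)⟩
  · obtain ⟨c, hc, h⟩ := list_color ((4,6) :: baseConf) ![2, 2, 2, 2, 3, 0, 2, 2]
      (by decide +kernel) (by decide +kernel) S (by
        have a := hp h1
        intro i; have := hS i; fin_cases i <;> simp [-Finset.card_pos] at * <;> omega)
    exact ⟨c, hc, fun e he => h e (by simp [he]), fun _ => h (4,6) (by simp), fun h => absurd h h2⟩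
  · obtain ⟨c, hc, h⟩ := list_color ((5,7) :: baseConf) ![2, 2, 2, 2, 2, 2, 0, 3]
      (by decide +kernel) (by decide +kernel) S (by
        have b := hq h2
        intro i; have := hS i; fin_cases i <;> simp [-Finset.card_pos] at * <;> omega)
    exact ⟨c, hc, fun e he => h e (by simp [he]), fun h => absurd h h1, fun _ => h (5,7) (by simp)⟩
  · obtain ⟨c, hc, h⟩ := list_color baseConf ![2, 2, 2, 2, 2, 0, 2, 2]
      (by decide +kernel) (by decide +kernel) S (by
        intro i; have := hS i; fin_cases i <;> simp [-Finset.card_pos] at * <;> omega)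
    exact ⟨c, hc, h, fun h => absurd h h1, fun h => absurd h h2⟩

lemma third_nbr {V : Type*} [Fintype V] (H : SimpleGraph V) [DecidableRel H.Adj]
    (a b c : V) (hd : H.degree a = 3) (hb : H.Adj a b) (hc : H.Adj a c) (hbc : b ≠ c) :
    ∃ d, d ≠ b ∧ d ≠ c ∧ ∀ u, H.Adj a u ↔ u = b ∨ u = c ∨ u = d := by
  classical
  have h1 : b ∈ H.neighborFinset a := by simpa using hb
  have h2 : c ∈ (H.neighborFinset a).erase b := by simp [hbc.symm, hc]
  have h3 : (((H.neighborFinset a).erase b).erase c).card = 1 := by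
    rw [Finset.card_erase_of_mem h2, Finset.card_erase_of_mem h1, H.card_neighborFinset_eq_degree, hd]
  obtain ⟨d, hd'⟩ := Finset.card_eq_one.1 h3
  have key : ∀ u, (u ≠ c ∧ u ≠ b ∧ H.Adj a u) ↔ u = d := by
    intro u
    have := Finset.ext_iff.1 hd' u
    simpa using this
  have kd := (key d).2 rfl
  refine ⟨d, kd.2.1, kd.1, fun u => ?_⟩
  have := key u
  grind

/-- Coloured edges that may conflict with the cycle edge `wx`. -/
noncomputable def cycF {V : Type*} [Fintype V] [DecidableEq V] (H : SimpleGraph V)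
    [DecidableRel H.Adj] (w w' x x' : V) : Finset (Sym2 V) :=
  ((H.neighborFinset w').erase w).image (fun t => s(w', t)) ∪
    ((H.neighborFinset x').erase x).image (fun t => s(x', t))

/-- Coloured edges that may conflict with the pendant edge `ww'`. -/
noncomputable def penF {V : Type*} [Fintype V] [DecidableEq V] (H : SimpleGraph V)
    [DecidableRel H.Adj] (w w' y : V) : Finset (Sym2 V) :=
  ((H.neighborFinset w').erase w).biUnion
    (fun a => (((H.neighborFinset a).erase w').erase y).image (fun t => s(a, t)))

section
variable {V : Type*} [Fintype V] [DecidableEq V] (H : SimpleGraph V) [DecidableRel H.Adj]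

lemma card_erase_nbr (hreg : ∀ a : V, H.degree a = 3) {a b : V} (h : H.Adj a b) :
    ((H.neighborFinset b).erase a).card = 2 := by
  rw [Finset.card_erase_of_mem (by simpa using h.symm), H.card_neighborFinset_eq_degree, hreg]

lemma card_cycF (hreg : ∀ a : V, H.degree a = 3) {w w' x x' : V} (h : H.Adj w w')
    (h' : H.Adj x x') : (cycF H w w' x x').card ≤ 4 := by
  refine (Finset.card_union_le _ _).trans ?_
  have h1 := Finset.card_image_le (s := (H.neighborFinset w').erase w) (f := fun t => s(w', t))
  have h2 := Finset.card_image_le (s := (H.neighborFinset x').erase x) (f := fun t => s(x', t))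
  rw [card_erase_nbr H hreg h] at h1
  rw [card_erase_nbr H hreg h'] at h2
  omega

lemma card_penF (hreg : ∀ a : V, H.degree a = 3) {w w' : V} (y : V) (h : H.Adj w w') :
    (penF H w w' y).card ≤ 4 := by
  have := Finset.card_biUnion_le_card_mul ((H.neighborFinset w').erase w)
    (fun a => (((H.neighborFinset a).erase w').erase y).image (fun t => s(a, t))) 2 (by
      intro a ha
      have haw : H.Adj w' a := by simpa using (Finset.mem_erase.1 ha).2
      refine Finset.card_image_le.trans ((Finset.card_le_card (Finset.erase_subset _ _)).trans ?_)
      rw [card_erase_nbr H hreg haw])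
  rw [card_erase_nbr H hreg h] at this
  exact this

lemma card_penF' (hreg : ∀ a : V, H.degree a = 3) {w w' y y' : V} (h : H.Adj w w')
    (hy : H.Adj y y') (hyw : y ≠ w') (hwy : y' ≠ w) (hadj : H.Adj w' y') :
    (penF H w w' y).card ≤ 3 := by
  have hmem : y' ∈ (H.neighborFinset w').erase w := by simp [hwy, hadj]
  have hc := card_erase_nbr H hreg h
  refine Finset.card_biUnion_le.trans ?_
  rw [← Finset.add_sum_erase _ _ hmem]
  have h1 : ((((H.neighborFinset y').erase w').erase y).image (fun t => s(y', t))).card ≤ 1 := by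
    refine Finset.card_image_le.trans ?_
    rw [Finset.card_erase_of_mem (by simp [hyw, hy.symm]), card_erase_nbr H hreg hadj]
  have h2 : ∑ a ∈ ((H.neighborFinset w').erase w).erase y',
      ((((H.neighborFinset a).erase w').erase y).image (fun t => s(a, t))).card
      ≤ (((H.neighborFinset w').erase w).erase y').card • 2 := by
    apply Finset.sum_le_card_nsmul
    intro a ha
    have haw : H.Adj w' a := by simpa using (Finset.mem_erase.1 (Finset.mem_erase.1 ha).2).2
    refine Finset.card_image_le.trans ((Finset.card_le_card (Finset.erase_subset _ _)).trans ?_)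
    rw [card_erase_nbr H hreg haw]
  rw [Finset.card_erase_of_mem hmem, hc] at h2
  simp only [smul_eq_mul] at h2
  omega

lemma mem_cycF {w w' x x' v t : V} (hvt : H.Adj v t) (h : (v = w' ∧ t ≠ w) ∨ (v = x' ∧ t ≠ x)) :
    s(v, t) ∈ cycF H w w' x x' := by
  rcases h with ⟨rfl, h⟩ | ⟨rfl, h⟩
  · exact Finset.mem_union_left _ (Finset.mem_image.2 ⟨t, by simp [h, hvt], rfl⟩)
  · exact Finset.mem_union_right _ (Finset.mem_image.2 ⟨t, by simp [h, hvt], rfl⟩)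

lemma mem_penF {w w' y v t : V} (hvt : H.Adj v t) (h : H.Adj w' v) (h1 : v ≠ w) (h2 : t ≠ w')
    (h3 : t ≠ y) : s(v, t) ∈ penF H w w' y :=
  Finset.mem_biUnion.2 ⟨v, by simp [h, h1], Finset.mem_image.2 ⟨t, by simp [h2, h3, hvt], rfl⟩⟩

lemma card_avail (g : Sym2 V → Fin 7) (F : Finset (Sym2 V)) (n : ℕ) (h : F.card ≤ n) :
    7 - n ≤ (Finset.univ \ F.image g).card := by
  have h1 := Finset.le_card_sdiff (F.image g) Finset.univ
  have h2 := Finset.card_image_le (s := F) (f := g)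
  simp only [Finset.card_univ, Fintype.card_fin] at h1
  omega

set_option maxHeartbeats 4000000 in
lemma core (hreg : ∀ a : V, H.degree a = 3) (htf : H.CliqueFree 3)
    (w x y z w' x' y' z' : V) (hnd : [w, x, y, z, w', x', y', z'].Nodup)
    (nw : ∀ u, H.Adj w u ↔ u = x ∨ u = z ∨ u = w')
    (nx : ∀ u, H.Adj x u ↔ u = y ∨ u = w ∨ u = x')
    (ny : ∀ u, H.Adj y u ↔ u = z ∨ u = x ∨ u = y')
    (nz : ∀ u, H.Adj z u ↔ u = w ∨ u = y ∨ u = z')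
    (g : Sym2 V → Fin 7)
    (hg : ∀ p q r t, p ∉ ({w, x, y, z} : Set V) → q ∉ ({w, x, y, z} : Set V) →
      r ∉ ({w, x, y, z} : Set V) → t ∉ ({w, x, y, z} : Set V) → H.Adj p q → H.Adj r t → H.Adj p r →
      p ≠ t → q ≠ r → q ≠ t → g s(p, q) ≠ g s(r, t)) :
    ∃ f : Sym2 V → Fin 7, IsInjEdgeColoring H f := by
  have aw : H.Adj w w' := (nw _).2 (by simp)
  have ax : H.Adj x x' := (nx _).2 (by simp)
  have ay : H.Adj y y' := (ny _).2 (by simp)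
  have az : H.Adj z z' := (nz _).2 (by simp)
  simp only [List.nodup_cons, List.mem_cons, List.not_mem_nil, not_or, not_false_eq_true,
    or_false, List.nodup_nil, and_true] at hnd
  obtain ⟨⟨n1, n2, n3, n4, n5, n6, n7⟩, ⟨n8, n9, n10, n11, n12, n13⟩, ⟨n14, n15, n16, n17, n18⟩,
    ⟨n19, n20, n21, n22⟩, ⟨n23, n24, n25⟩, ⟨n26, n27⟩, n28⟩ := hnd
  let F : Fin 8 → Finset (Sym2 V) := ![cycF H w w' x x', cycF H x x' y y', cycF H y y' z z',
    cycF H z z' w w', penF H w w' y, penF H x x' z, penF H y y' w, penF H z z' x]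
  let E : Fin 8 → Sym2 V := ![s(w, x), s(x, y), s(y, z), s(z, w), s(w, w'), s(x, x'), s(y, y'), s(z, z')]
  have hF : ∀ i, (F i).card ≤ 4 := by
    intro i
    fin_cases i
    · exact card_cycF H hreg aw ax
    · exact card_cycF H hreg ax ay
    · exact card_cycF H hreg ay az
    · exact card_cycF H hreg az aw
    · exact card_penF H hreg _ aw
    · exact card_penF H hreg _ ax
    · exact card_penF H hreg _ ay
    · exact card_penF H hreg _ az
  obtain ⟨c, hcS, hcb, hcp, hcq⟩ := list_color_C4 (H.Adj w' y') (H.Adj x' z')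
    (fun i => Finset.univ \ (F i).image g) (fun i => card_avail g (F i) 4 (hF i))
    (fun h => ⟨card_avail g _ 3 (card_penF' H hreg aw ay (by tauto) (by tauto) h),
      card_avail g _ 3 (card_penF' H hreg ay aw (by tauto) (by tauto) h.symm)⟩)
    (fun h => ⟨card_avail g _ 3 (card_penF' H hreg ax az (by tauto) (by tauto) h),
      card_avail g _ 3 (card_penF' H hreg az ax (by tauto) (by tauto) h.symm)⟩)
  have hEinj : Function.Injective E := by
    intro i j h
    fin_cases i <;> fin_cases j <;> simp [E] at h ⊢ <;> grind
  let f : Sym2 V → Fin 7 := fun e => if h : ∃ i, E i = e then c h.choose else g e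
  have fE : ∀ i, f (E i) = c i := by
    intro i
    have h : ∃ j, E j = E i := ⟨i, rfl⟩
    simp only [f, h, dif_pos]
    exact congrArg c (hEinj h.choose_spec)
  have fo : ∀ e, (¬ ∃ i, E i = e) → f e = g e := fun e h => by simp only [f, h, dif_neg, not_false_eq_true]
  have old : ∀ p q, H.Adj p q → (¬ ∃ i, E i = s(p, q)) →
      p ∉ ({w, x, y, z} : Set V) ∧ q ∉ ({w, x, y, z} : Set V) := by
    have half : ∀ p q, H.Adj p q → (¬ ∃ i, E i = s(p, q)) → p ∉ ({w, x, y, z} : Set V) := by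
      intro p q hpq hn hp
      apply hn
      simp only [Set.mem_insert_iff, Set.mem_singleton_iff] at hp
      rcases hp with rfl | rfl | rfl | rfl
      · rcases (nw _).1 hpq with rfl | rfl | rfl
        exacts [⟨0, rfl⟩, ⟨3, Sym2.eq_swap⟩, ⟨4, rfl⟩]
      · rcases (nx _).1 hpq with rfl | rfl | rfl
        exacts [⟨1, rfl⟩, ⟨0, Sym2.eq_swap⟩, ⟨5, rfl⟩]
      · rcases (ny _).1 hpq with rfl | rfl | rfl
        exacts [⟨2, rfl⟩, ⟨1, Sym2.eq_swap⟩, ⟨6, rfl⟩]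
      · rcases (nz _).1 hpq with rfl | rfl | rfl
        exacts [⟨3, rfl⟩, ⟨2, Sym2.eq_swap⟩, ⟨7, rfl⟩]
    intro p q hpq hn
    exact ⟨half p q hpq hn, half q p hpq.symm (by rwa [Sym2.eq_swap])⟩
  have newold : ∀ i, ∀ u ∈ E i, ∀ v t, v ∉ ({w, x, y, z} : Set V) → t ∉ ({w, x, y, z} : Set V) →
      v ∉ E i → t ∉ E i → H.Adj v t → H.Adj u v → s(v, t) ∈ F i := by
    intro i u hu v t hv ht hvE htE hvt huv
    simp only [Set.mem_insert_iff, Set.mem_singleton_iff, not_or] at hv ht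
    have cw := nw v
    have cx := nx v
    have cy := ny v
    have cz := nz v
    clear hg hcb hcS fE fo old hEinj hF nw nx ny nz hreg htf
    fin_cases i <;> simp [E] at hu hvE htE <;> clear hcp hcq E f
    · exact mem_cycF H hvt (by grind)
    · exact mem_cycF H hvt (by grind)
    · exact mem_cycF H hvt (by grind)
    · exact mem_cycF H hvt (by grind)
    · exact mem_penF H hvt (by grind) (by grind) (by grind) (by grind)
    · exact mem_penF H hvt (by grind) (by grind) (by grind) (by grind)
    · exact mem_penF H hvt (by grind) (by grind) (by grind) (by grind)
    · exact mem_penF H hvt (by grind) (by grind) (by grind) (by grind)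
  have newold' : ∀ i, ∀ u ∈ E i, ∀ v t, v ∉ ({w, x, y, z} : Set V) → t ∉ ({w, x, y, z} : Set V) →
      v ∉ E i → t ∉ E i → H.Adj v t → H.Adj u v → c i ≠ g s(v, t) := by
    intro i u hu v t hv ht hvE htE hvt huv heq
    have h := (Finset.mem_sdiff.1 (hcS i)).2
    exact h (Finset.mem_image.2 ⟨_, newold i u hu v t hv ht hvE htE hvt huv, heq.symm⟩)
  have newnew : ∀ i j, (∀ u ∈ E i, u ∉ E j) → ∀ u ∈ E i, ∀ v ∈ E j, H.Adj u v → c i ≠ c j := by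
    have s1 := fun u => H.adj_comm w u
    have s2 := fun u => H.adj_comm x u
    have s3 := fun u => H.adj_comm y u
    have s4 := fun u => H.adj_comm z u
    have s5 := fun u => H.adj_comm w' u
    have s6 := fun u => H.adj_comm x' u
    simp only [baseConf, List.forall_mem_cons] at hcb
    clear hg hcS fE fo old hEinj hF hreg htf newold newold'
    intro i j hd u hu v hv huv
    fin_cases i <;> fin_cases j <;> simp [E] at hd hu hv ⊢ <;> grind
  have key : ∀ p q r t, H.Adj p q → H.Adj r t → H.Adj p r → p ≠ t → q ≠ r → q ≠ t →
      f s(p, q) ≠ f s(r, t) := by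
    intro p q r t hpq hrt hpr h1 h2 h3
    by_cases e1 : ∃ i, E i = s(p, q) <;> by_cases e2 : ∃ j, E j = s(r, t)
    · obtain ⟨i, hi⟩ := e1
      obtain ⟨j, hj⟩ := e2
      rw [← hi, ← hj, fE, fE]
      refine newnew i j ?_ p (by simp [hi]) r (by simp [hj]) hpr
      rw [hi, hj]
      have := hpr.ne
      intro u hu
      simp at hu ⊢
      grind
    · rw [fo _ e2]
      obtain ⟨i, hi⟩ := e1
      have ho := old r t hrt e2
      rw [← hi, fE]
      have := hpr.ne
      exact newold' i p (by simp [hi]) r t ho.1 ho.2 (by simp [hi]; grind) (by simp [hi]; grind) hrt hpr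
    · rw [fo _ e1]
      obtain ⟨i, hi⟩ := e2
      have ho := old p q hpq e1
      rw [← hi, fE]
      have := hpr.ne
      exact (newold' i r (by simp [hi]) p q ho.1 ho.2 (by simp [hi]; grind) (by simp [hi]; grind) hpq
        hpr.symm).symm
    · rw [fo _ e1, fo _ e2]
      have o1 := old p q hpq e1
      have o2 := old r t hrt e2
      exact hg p q r t o1.1 o1.2 o2.1 o2.2 hpq hrt hpr h1 h2 h3
  refine ⟨f, ?_⟩
  rintro e₁ he₁ e₂ he₂ ⟨-, ⟨hdis, u, hu, v, hv, huv⟩ | ⟨a, b, d, hab, hbd, had, -⟩⟩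
  · obtain ⟨q, rfl⟩ := Sym2.mem_iff_exists.1 hu
    obtain ⟨t, rfl⟩ := Sym2.mem_iff_exists.1 hv
    have d1 := hdis u (by simp)
    have d2 := hdis q (by simp)
    simp only [Sym2.mem_iff, not_or] at d1 d2
    exact key u q v t he₁ he₂ huv d1.2 d2.1 d2.2
  · exact absurd (is3Clique_triple_iff.2 ⟨hab, had, hbd⟩) (htf {a, b, d})

end

/-- Deleting a 4-cycle `w x y z` from a 3-regular triangle-free graph with no copy of
`K_{2,3}`: if `H - {w,x,y,z}` has an injective edge-coloring with 7 colors, then so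
does `H`. -/
theorem extend_coloring_C4 {V : Type*} [Fintype V] (H : SimpleGraph V)
    [DecidableRel H.Adj] (hreg : ∀ a : V, H.degree a = 3) (htf : H.CliqueFree 3)
    (hK23 : ¬ ∃ x y z u v : V, (x ≠ y ∧ x ≠ z ∧ y ≠ z ∧ u ≠ v) ∧
      H.Adj x u ∧ H.Adj x v ∧ H.Adj y u ∧ H.Adj y v ∧ H.Adj z u ∧ H.Adj z v)
    (w x y z : V) (hwx : w ≠ x) (hwy : w ≠ y) (hwz : w ≠ z) (hxy : x ≠ y)
    (hxz : x ≠ z) (hyz : y ≠ z)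
    (c₁ : H.Adj w x) (c₂ : H.Adj x y) (c₃ : H.Adj y z) (c₄ : H.Adj z w)
    (hcol : ∃ f : Sym2 (({w, x, y, z}ᶜ : Set V)) → Fin 7,
      IsInjEdgeColoring (H.induce ({w, x, y, z}ᶜ : Set V)) f) :
    ∃ f : Sym2 V → Fin 7, IsInjEdgeColoring H f := by
  classical
  have tri : ∀ a b d, H.Adj a b → H.Adj b d → H.Adj a d → False := fun a b d hab hbd had =>
    absurd (is3Clique_triple_iff.2 ⟨hab, had, hbd⟩) (htf {a, b, d})
  obtain ⟨w', w1, w2, nw⟩ := third_nbr H w x z (hreg w) c₁ c₄.symm hxz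
  obtain ⟨x', x1, x2, nx⟩ := third_nbr H x y w (hreg x) c₂ c₁.symm hwy.symm
  obtain ⟨y', y1, y2, ny⟩ := third_nbr H y z x (hreg y) c₃ c₂.symm hxz.symm
  obtain ⟨z', z1, z2, nz⟩ := third_nbr H z w y (hreg z) c₄ c₃.symm hwy
  have aw : H.Adj w w' := (nw _).2 (by simp)
  have ax : H.Adj x x' := (nx _).2 (by simp)
  have ay : H.Adj y y' := (ny _).2 (by simp)
  have az : H.Adj z z' := (nz _).2 (by simp)
  have k1 : ¬ H.Adj w y := fun h => tri w x y c₁ c₂ h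
  have k2 : ¬ H.Adj x z := fun h => tri x y z c₂ c₃ h
  have m1 : w' ≠ w := aw.ne.symm
  have m2 : x' ≠ x := ax.ne.symm
  have m3 : y' ≠ y := ay.ne.symm
  have m4 : z' ≠ z := az.ne.symm
  have m5 : w' ≠ y := fun h => k1 (h ▸ aw)
  have m6 : x' ≠ z := fun h => k2 (h ▸ ax)
  have m7 : y' ≠ w := fun h => k1 (h ▸ ay).symm
  have m8 : z' ≠ x := fun h => k2 (h ▸ az).symm
  have d1 : w' ≠ x' := fun h => tri w x x' c₁ ax (h ▸ aw)
  have d2 : x' ≠ y' := fun h => tri x y y' c₂ ay (h ▸ ax)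
  have d3 : y' ≠ z' := fun h => tri y z z' c₃ az (h ▸ ay)
  have d4 : z' ≠ w' := fun h => tri z w w' c₄ aw (h ▸ az)
  have d5 : w' ≠ y' := fun h => hK23 ⟨x, z, w', w, y, ⟨hxz, w1.symm, w2.symm, hwy⟩, c₁.symm, c₂, c₄,
    c₃.symm, aw.symm, (h ▸ ay.symm)⟩
  have d6 : x' ≠ z' := fun h => hK23 ⟨w, y, x', x, z, ⟨hwy, x2.symm, x1.symm, hxz⟩, c₁, c₄.symm,
    c₂.symm, c₃, ax.symm, (h ▸ az.symm)⟩
  obtain ⟨f₀, hf₀⟩ := hcol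
  let ι : V → (({w, x, y, z}ᶜ : Set V)) := fun v =>
    if h : v ∈ ({w, x, y, z}ᶜ : Set V) then ⟨v, h⟩ else ⟨w', by simp [*]⟩
  have hι : ∀ v, v ∉ ({w, x, y, z} : Set V) → (ι v : V) = v := by
    intro v hv
    have : v ∈ ({w, x, y, z}ᶜ : Set V) := hv
    simp only [ι, this, dif_pos]
  refine core H hreg htf w x y z w' x' y' z' (by simp; grind) nw nx ny nz
    (fun e => f₀ (Sym2.map ι e)) ?_
  intro p q r t hp hq hr ht hpq hrt hpr h1 h2 h3
  have e : ∀ a b, a ∉ ({w, x, y, z} : Set V) → b ∉ ({w, x, y, z} : Set V) → (ι a = ι b ↔ a = b) := by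
    intro a b ha hb
    rw [Subtype.ext_iff, hι a ha, hι b hb]
  simp only [Sym2.map_mk]
  have h0 := hpr.ne
  refine hf₀ _ ?_ _ ?_ ⟨?_, Or.inl ⟨?_, ι p, by simp, ι r, by simp, ?_⟩⟩
  · simpa [hι, hp, hq] using (show H.Adj (ι p) (ι q) by rwa [hι p hp, hι q hq])
  · simpa [hι, hr, ht] using (show H.Adj (ι r) (ι t) by rwa [hι r hr, hι t ht])
  · simp only [ne_eq, Sym2.eq_iff, e p r hp hr, e q t hq ht, e p t hp ht, e q r hq hr]
    tauto
  · intro u hu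
    simp only [Sym2.mem_iff] at hu ⊢
    rcases hu with rfl | rfl
    · rw [e p r hp hr, e p t hp ht]; tauto
    · rw [e q r hq hr, e q t hq ht]; tauto
  · show H.Adj (ι p) (ι r)
    rwa [hι p hp, hι r hr]
end
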